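/- arXiv:0804.2584 — 10 statements merged into one kernel-verified Lean document; each statement's English description precedes it below -/
import Mathlib

section
/- For every simple graph G on n vertices, there exists a collection of at most ⌊n²/4⌋ cliques of G, each of which is an edge (a 2-vertex clique) or a triangle (a 3-vertex clique), such that every edge of G lies in exactly one clique of the collection. -/
/-!
The proof is by induction on the number `n` of vertices. Let `v` be a vertex of minimum degree `d`,
let `N` be its neighbourhood, and put `r = d - ⌊n/2⌋` (or `r = 0` if `d ≤ ⌊n/2⌋`). When `r > 0`,
every vertex of `N` has at least `2d - n ≥ 2r - 1` neighbours inside `N`, so a matching of `r` edges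
in `N` can be chosen greedily (`exists_blocks`). The `r` matching edges together with `v` give `r`
triangles, and the remaining `d - 2r` vertices of `N` give edges at `v`; these `d - r ≤ ⌊n/2⌋`
cliques cover the edges at `v` and the matching edges. Deleting `v` and the matching edges leaves a
graph on `n - 1` vertices, and `⌊(n-1)²/4⌋ + ⌊n/2⌋ = ⌊n²/4⌋`.

For the induction, the vertex set is a finset `S` of a fixed type, and `G` is a graph on that type
all of whose edges lie in `S` (`exists_partition`).
-/

open Classical in
/-- A greedy matching of `k` edges inside `N`, presented as the partition `M` of `N` into the `k`
matching edges and the remaining singletons. -/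
lemma exists_blocks {V : Type*} (G : SimpleGraph V) (k : ℕ) :
    ∀ N : Finset V, (0 < k → N.Nonempty) →
      (∀ u ∈ N, 2 * k ≤ (N.filter (G.Adj u)).card + 1) →
      ∃ M : Finset (Finset V), M.card + k ≤ N.card ∧
        (∀ B ∈ M, B ⊆ N ∧ G.IsClique (B : Set V) ∧ (B.card = 1 ∨ B.card = 2)) ∧
        (∀ w ∈ N, ∃! B, B ∈ M ∧ w ∈ B) := by
  induction k with
  | zero =>
    intro N _ _
    refine ⟨N.image (fun w => {w}), by simpa using Finset.card_image_le, ?_, ?_⟩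
    · intro B hB
      obtain ⟨w, hw, rfl⟩ := Finset.mem_image.1 hB
      simp [hw]
    · intro w hw
      refine ⟨{w}, by simp [hw], ?_⟩
      rintro B ⟨hB, hwB⟩
      obtain ⟨x, hx, rfl⟩ := Finset.mem_image.1 hB
      simp_all
  | succ k ih =>
    intro N hne hdeg
    obtain ⟨u, hu⟩ := hne (Nat.succ_pos k)
    have hdu := hdeg u hu
    obtain ⟨w, hw⟩ : (N.filter (G.Adj u)).Nonempty := by
      rw [← Finset.card_pos]; omega
    obtain ⟨hwN, huw⟩ := Finset.mem_filter.1 hw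
    have hpair : ({u, w} : Finset V).card = 2 := Finset.card_pair huw.ne
    have hsub : ({u, w} : Finset V) ⊆ N := by
      intro x hx
      simp only [Finset.mem_insert, Finset.mem_singleton] at hx
      rcases hx with rfl | rfl <;> assumption
    have hcard : (N \ {u, w}).card + 2 = N.card := by
      have := Finset.card_sdiff_add_card_eq_card hsub
      omega
    have hNu : (N.filter (G.Adj u)).card + 1 ≤ N.card := by
      have : N.filter (G.Adj u) ⊆ N.erase u := by
        intro x hx
        obtain ⟨hx, hux⟩ := Finset.mem_filter.1 hx
        exact Finset.mem_erase.2 ⟨hux.ne', hx⟩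
      have := Finset.card_le_card this
      rw [Finset.card_erase_of_mem hu] at this
      have := Finset.card_pos.2 ⟨u, hu⟩
      omega
    obtain ⟨M, hMc, hMB, hMu⟩ := ih (N \ {u, w})
      (by intro hk; rw [← Finset.card_pos]; omega)
      (by
        intro x hx
        have h1 := hdeg x (Finset.mem_sdiff.1 hx).1
        have h2 : (N.filter (G.Adj x)) ⊆ ((N \ {u, w}).filter (G.Adj x)) ∪ {u, w} := by
          intro y hy
          simp only [Finset.mem_union, Finset.mem_filter, Finset.mem_sdiff] at hy ⊢
          tauto
        have h3 := (Finset.card_le_card h2).trans (Finset.card_union_le _ _)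
        omega)
    refine ⟨insert {u, w} M, ?_, ?_, ?_⟩
    · have := Finset.card_insert_le ({u, w} : Finset V) M
      omega
    · intro B hB
      rcases Finset.mem_insert.1 hB with rfl | hB
      · refine ⟨hsub, ?_, Or.inr hpair⟩
        simp [huw]
      · obtain ⟨h1, h2⟩ := hMB B hB
        exact ⟨h1.trans Finset.sdiff_subset, h2⟩
    · intro x hx
      by_cases hxp : x ∈ ({u, w} : Finset V)
      · refine ⟨{u, w}, ⟨Finset.mem_insert_self _ _, hxp⟩, ?_⟩
        rintro B ⟨hB, hxB⟩
        rcases Finset.mem_insert.1 hB with h | hB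
        · exact h
        · exact absurd hxp (Finset.mem_sdiff.1 ((hMB B hB).1 hxB)).2
      · obtain ⟨B, ⟨hB, hxB⟩, huniq⟩ := hMu x (Finset.mem_sdiff.2 ⟨hx, hxp⟩)
        refine ⟨B, ⟨Finset.mem_insert_of_mem hB, hxB⟩, ?_⟩
        rintro C ⟨hC, hxC⟩
        rcases Finset.mem_insert.1 hC with rfl | hC
        · exact absurd hxC hxp
        · exact huniq C ⟨hC, hxC⟩

open Classical in
/-- The theorem for a graph whose edges all lie in a finset `S` with `n` elements. -/
lemma exists_partition {V : Type*} (n : ℕ) :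
    ∀ (S : Finset V) (G : SimpleGraph V), S.card = n → (∀ a b, G.Adj a b → a ∈ S) →
      ∃ Q : Finset (Finset V), Q.card ≤ n ^ 2 / 4 ∧
        (∀ C ∈ Q, G.IsClique (C : Set V) ∧ (C.card = 2 ∨ C.card = 3)) ∧
        (∀ u v, G.Adj u v → ∃! C, C ∈ Q ∧ u ∈ C ∧ v ∈ C) := by
  induction n with
  | zero =>
    intro S G hS hG
    refine ⟨∅, by simp, by simp, ?_⟩
    intro u v huv
    have := hG u v huv
    simp [Finset.card_eq_zero.1 hS] at this
  | succ n ih =>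
    intro S G hS hG
    obtain ⟨v, hvS, hmin⟩ := Finset.exists_min_image S (fun x => (S.filter (G.Adj x)).card)
      (Finset.card_pos.1 (by omega))
    set N := S.filter (G.Adj v) with hN
    have hmemN : ∀ x, x ∈ N ↔ G.Adj v x := fun x =>
      ⟨fun h => (Finset.mem_filter.1 h).2, fun h => Finset.mem_filter.2 ⟨hG x v h.symm, h⟩⟩
    obtain ⟨M, hMc, hMB, hMu⟩ := exists_blocks G (N.card - (n + 1) / 2) N
      (by intro h; rw [← Finset.card_pos]; omega)
      (by
        intro u hu
        have h1 := hmin u (Finset.mem_filter.1 hu).1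
        have h2 : N.filter (G.Adj u) = N ∩ S.filter (G.Adj u) := by
          ext y
          simp only [Finset.mem_filter, Finset.mem_inter, hN]
          tauto
        have h3 := Finset.card_union_add_card_inter N (S.filter (G.Adj u))
        have h4 : (N ∪ S.filter (G.Adj u)).card ≤ S.card :=
          Finset.card_le_card (Finset.union_subset (Finset.filter_subset _ _)
            (Finset.filter_subset _ _))
        rw [h2]
        omega)
    have hvM : ∀ B ∈ M, v ∉ B := fun B hB hv =>
      G.irrefl ((hmemN v).1 ((hMB B hB).1 hv))
    -- What remains after deleting `v` and the matching edges.
    let G' : SimpleGraph V :=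
      { Adj := fun a b => G.Adj a b ∧ a ≠ v ∧ b ≠ v ∧ ∀ B ∈ M, a ∈ B → b ∉ B
        symm := ⟨fun a b ⟨h1, h2, h3, h4⟩ => ⟨h1.symm, h3, h2, fun B hB hb ha => h4 B hB ha hb⟩⟩
        loopless := ⟨fun a h => G.irrefl h.1⟩ }
    obtain ⟨Q, hQc, hQ, hQu⟩ := ih (S.erase v) G'
      (by rw [Finset.card_erase_of_mem hvS]; omega)
      (fun a b h => Finset.mem_erase.2 ⟨h.2.1, hG a b h.1⟩)
    have hvQ : ∀ C ∈ Q, v ∉ C := by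
      intro C hC hv
      obtain ⟨h1, h2⟩ := hQ C hC
      obtain ⟨y, hy, hyv⟩ := Finset.exists_mem_ne (by omega : 1 < C.card) v
      exact (h1 hy hv hyv).2.2.1 rfl
    have hmem : ∀ B x, x ≠ v → x ∈ insert v B → x ∈ B := fun B x hx h =>
      (Finset.mem_insert.1 h).resolve_left hx
    have hblock : ∀ B ∈ M, ∀ B' ∈ M, ∀ x ∈ B, x ∈ B' → B' = B := by
      intro B hB B' hB' x hx hx'
      exact (hMu x ((hMB B hB).1 hx)).unique ⟨hB', hx'⟩ ⟨hB, hx⟩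
    have hstar : ∀ b, G.Adj v b →
        ∃! C, C ∈ Q ∪ M.image (insert v) ∧ v ∈ C ∧ b ∈ C := by
      intro b hb
      obtain ⟨B, ⟨hB, hbB⟩, -⟩ := hMu b ((hmemN b).2 hb)
      refine ⟨insert v B, ⟨Finset.mem_union_right _ (Finset.mem_image_of_mem _ hB),
        Finset.mem_insert_self _ _, Finset.mem_insert_of_mem hbB⟩, ?_⟩
      rintro C ⟨hC, hvC, hbC⟩
      rcases Finset.mem_union.1 hC with hC | hC
      · exact absurd hvC (hvQ C hC)
      · obtain ⟨B', hB', rfl⟩ := Finset.mem_image.1 hC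
        rw [hblock B hB B' hB' b hbB (hmem B' b hb.ne' hbC)]
    refine ⟨Q ∪ M.image (insert v), ?_, ?_, ?_⟩
    · have h1 := Finset.card_union_le Q (M.image (insert v))
      have h2 : (M.image (insert v)).card ≤ M.card := Finset.card_image_le
      have h3 : n ^ 2 / 4 + (n + 1) / 2 ≤ (n + 1) ^ 2 / 4 := by
        obtain ⟨m, rfl | rfl⟩ := Nat.even_or_odd' n
        · have e1 : (2 * m) ^ 2 = 4 * (m * m) := by ring
          have e2 : (2 * m + 1) ^ 2 = 4 * (m * m) + 4 * m + 1 := by ring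
          omega
        · have e1 : (2 * m + 1) ^ 2 = 4 * (m * m) + 4 * m + 1 := by ring
          have e2 : (2 * m + 1 + 1) ^ 2 = 4 * (m * m) + 8 * m + 4 := by ring
          omega
      omega
    · intro C hC
      rcases Finset.mem_union.1 hC with hC | hC
      · obtain ⟨h1, h2⟩ := hQ C hC
        exact ⟨fun x hx y hy hxy => (h1 hx hy hxy).1, h2⟩
      · obtain ⟨B, hB, rfl⟩ := Finset.mem_image.1 hC
        obtain ⟨h1, h2, h3⟩ := hMB B hB
        refine ⟨?_, ?_⟩
        · rw [Finset.coe_insert]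
          exact h2.insert fun b hb _ => (hmemN b).1 (h1 hb)
        · rw [Finset.card_insert_of_notMem (hvM B hB)]
          omega
    · intro a b hab
      by_cases hav : a = v
      · subst hav
        exact hstar b hab
      by_cases hbv : b = v
      · subst hbv
        simpa only [and_comm] using hstar a hab.symm
      by_cases hB : ∃ B ∈ M, a ∈ B ∧ b ∈ B
      · obtain ⟨B, hB, haB, hbB⟩ := hB
        refine ⟨insert v B, ⟨Finset.mem_union_right _ (Finset.mem_image_of_mem _ hB),
          Finset.mem_insert_of_mem haB, Finset.mem_insert_of_mem hbB⟩, ?_⟩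
        rintro C ⟨hC, haC, hbC⟩
        rcases Finset.mem_union.1 hC with hC | hC
        · exact absurd hbB (((hQ C hC).1 haC hbC hab.ne).2.2.2 B hB haB)
        · obtain ⟨B', hB', rfl⟩ := Finset.mem_image.1 hC
          rw [hblock B hB B' hB' a haB (hmem B' a hav haC)]
      · have hab' : G'.Adj a b :=
          ⟨hab, hav, hbv, fun B hBM ha hb => hB ⟨B, hBM, ha, hb⟩⟩
        obtain ⟨C, ⟨hC, haC, hbC⟩, huniq⟩ := hQu a b hab'
        refine ⟨C, ⟨Finset.mem_union_left _ hC, haC, hbC⟩, ?_⟩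
        rintro D ⟨hD, haD, hbD⟩
        rcases Finset.mem_union.1 hD with hD | hD
        · exact huniq D ⟨hD, haD, hbD⟩
        · obtain ⟨B, hBM, rfl⟩ := Finset.mem_image.1 hD
          exact absurd ⟨B, hBM, hmem B a hav haD, hmem B b hbv hbD⟩ hB

/-- Every simple graph on `n` vertices admits a clique partition of its edge set
into at most `⌊n²/4⌋` cliques, each of which is an edge or a triangle. -/
theorem stmt_0 (n : ℕ) (G : SimpleGraph (Fin n)) :
    ∃ Q : Finset (Finset (Fin n)),
      Q.card ≤ n ^ 2 / 4 ∧
      (∀ C ∈ Q, G.IsClique (C : Set (Fin n)) ∧ (C.card = 2 ∨ C.card = 3)) ∧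
      (∀ u v : Fin n, G.Adj u v → ∃! C, C ∈ Q ∧ u ∈ C ∧ v ∈ C) := by
  exact exists_partition n Finset.univ G (by simp) (fun a _ _ => Finset.mem_univ a)
end

section
/- For every simple graph G on n ≥ 4 vertices (possibly with isolated vertices), there exist cliques Q₁, …, Q_N of G with N ≤ ⌊n²/4⌋, each Q_i having at most 3 vertices, such that every edge of G lies in exactly one Q_i, and such that for every pair of distinct vertices u, v of G the set of indices {i : u ∈ Q_i} is different from the set of indices {i : v ∈ Q_i}. -/
/-!
The proof is the Erdős–Goodman–Pósa induction on the number `n` of vertices, with the separation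
of vertices carried along.

Let `v` be a vertex of minimum degree `d`. Since `⌊n² / 4⌋ - ⌊(n - 1)² / 4⌋ = ⌊n / 2⌋`, at most
`⌊n / 2⌋` new cliques may be spent on the edges at `v`. If `d = ⌊n / 2⌋ + r` with `r ≥ 1`, every
vertex of the neighbourhood `N` of `v` has at least `2 * d - n ≥ 2 * r - 1` neighbours in `N`, so
`N` contains a matching of `r` edges (`exists_matching`). Hence `N` splits into at most `⌊n / 2⌋`
edges and single vertices (`exists_nbhd_partition`). Joining each part to `v` gives the new
triangles and edges, and the induction hypothesis is applied to `G - v` with the matching edges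
removed.

Vertices separated before stay separated. The vertex `v` is separated from all others if it lies
in two of the new cliques, as these meet only in `v`; otherwise at most one new clique was used and
`⌊n / 2⌋ ≥ 2` leaves room for the clique `{v}` (`SepPartition.extend`).

The bound fails for the triangle on three vertices, so the induction starts at `n = 4`, where the
`64` edge sets are checked by evaluation (`familyFour_spec`).
-/

/-- `SepPartition G s F` says that `F` is a set of cliques of `G` on at most three vertices of `s`
such that every edge of `G` inside `s` lies in exactly one member of `F`, and any two distinct
vertices of `s` are separated by a member of `F`. -/
def SepPartition {V : Type*} (G : SimpleGraph V) (s : Finset V) (F : Finset (Finset V)) : Prop :=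
  (∀ Q ∈ F, Q ⊆ s ∧ Q.card ≤ 3 ∧ ∀ u ∈ Q, ∀ w ∈ Q, u ≠ w → G.Adj u w) ∧
  (∀ u ∈ s, ∀ w ∈ s, G.Adj u w →
    ∃ Q ∈ F, (u ∈ Q ∧ w ∈ Q) ∧ ∀ Q' ∈ F, u ∈ Q' → w ∈ Q' → Q' = Q) ∧
  (∀ u ∈ s, ∀ w ∈ s, u ≠ w → ∃ Q ∈ F, ¬(u ∈ Q ↔ w ∈ Q))

/-! ### Four vertices -/

/-- The six possible edges on four vertices. The set `{i, j, …}` is encoded by the number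
`2 ^ i + 2 ^ j + …`. -/
def pairsFour : List ℕ := [3, 5, 9, 6, 10, 12]

/-- A separating clique partition of a graph on `Fin 4`, given by its edge set `E`, with sets
encoded as in `pairsFour`. With at most four edges, the edges themselves are used, together with
singletons if there are fewer than three edges. With five or six edges, one triangle and the
remaining edges are used. -/
def familyFour (E : List ℕ) : List ℕ :=
  if E.length ≤ 1 then E ++ [1, 2, 4]
  else if E.length = 2 then E ++ [1, if 9 ∈ E then 2 else 8]
  else if E.length ≤ 4 then E
  else
    let T := if 3 ∉ E then 13 else if 5 ∉ E ∨ 6 ∉ E then 11 else 7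
    T :: E.filter fun e => e &&& T ≠ e

set_option synthInstance.maxHeartbeats 400000 in
set_option synthInstance.maxSize 4000 in
lemma familyFour_spec : ∀ E ∈ pairsFour.sublists,
    (familyFour E).length ≤ 4 ∧
    (∀ m ∈ familyFour E, (∃ x : Fin 4, m.testBit x = false) ∧
      ∀ u w : Fin 4, m.testBit u = true → m.testBit w = true → u ≠ w →
        2 ^ u.val ||| 2 ^ w.val ∈ E) ∧
    (∀ u w : Fin 4, 2 ^ u.val ||| 2 ^ w.val ∈ E →
      ∃ m ∈ familyFour E, (m.testBit u = true ∧ m.testBit w = true) ∧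
        ∀ m' ∈ familyFour E, m'.testBit u = true → m'.testBit w = true → m' = m) ∧
    (∀ u w : Fin 4, u ≠ w →
      ∃ m ∈ familyFour E, ¬(m.testBit u = true ↔ m.testBit w = true)) := by
  decide +kernel

lemma exists_sepPartition_fin_four (G : SimpleGraph (Fin 4)) :
    ∃ F, F.card ≤ 4 ∧ SepPartition G Finset.univ F := by
  classical
  set E := pairsFour.filter fun e =>
    ∀ u w : Fin 4, e.testBit u = true → e.testBit w = true → u ≠ w → G.Adj u w with hE
  have hadj : ∀ u w : Fin 4, 2 ^ u.val ||| 2 ^ w.val ∈ E ↔ G.Adj u w := by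
    intro u w
    have hp : 2 ^ u.val ||| 2 ^ w.val ∈ pairsFour ↔ u ≠ w := by
      revert u w; decide +kernel
    have hb : ∀ x : Fin 4, (2 ^ u.val ||| 2 ^ w.val).testBit x = true ↔ x = u ∨ x = w := by
      revert u w; decide +kernel
    simp only [hE, List.mem_filter, hp, decide_eq_true_eq, hb]
    constructor
    · rintro ⟨h, h'⟩
      exact h' u w (Or.inl rfl) (Or.inr rfl) h
    · intro h
      refine ⟨h.ne, ?_⟩
      rintro x y (rfl | rfl) (rfl | rfl) hxy
      exacts [absurd rfl hxy, h, h.symm, absurd rfl hxy]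
  obtain ⟨h1, h2, h3, h4⟩ := familyFour_spec E (List.mem_sublists.2 List.filter_sublist)
  simp only [hadj] at h2 h3
  let dec : ℕ → Finset (Fin 4) := fun m => Finset.univ.filter fun i => m.testBit i = true
  have hdec : ∀ m i, i ∈ dec m ↔ m.testBit i = true := fun m i => by simp [dec]
  have hmem : ∀ Q, Q ∈ (familyFour E).toFinset.image dec ↔ ∃ m ∈ familyFour E, dec m = Q :=
    fun Q => by simp
  refine ⟨(familyFour E).toFinset.image dec,
    (Finset.card_image_le.trans (List.toFinset_card_le _)).trans h1, ?_, ?_, ?_⟩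
  · intro Q hQ
    obtain ⟨m, hm, rfl⟩ := (hmem Q).1 hQ
    obtain ⟨⟨x, hx⟩, h⟩ := h2 m hm
    refine ⟨Finset.subset_univ _, ?_, fun u hu w hw => h u w ((hdec m u).1 hu) ((hdec m w).1 hw)⟩
    have hlt := Finset.card_lt_univ_of_notMem (s := dec m) (x := x) (by simp [hdec, hx])
    rw [Fintype.card_fin] at hlt
    omega
  · intro u _ w _ huw
    obtain ⟨m, hm, hmm, huniq⟩ := h3 u w huw
    refine ⟨dec m, (hmem _).2 ⟨m, hm, rfl⟩, by simpa only [hdec] using hmm, ?_⟩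
    intro Q' hQ' hu hw
    obtain ⟨m', hm', rfl⟩ := (hmem Q').1 hQ'
    rw [huniq m' hm' ((hdec m' u).1 hu) ((hdec m' w).1 hw)]
  · intro u _ w _ huw
    obtain ⟨m, hm, hmm⟩ := h4 u w huw
    exact ⟨dec m, (hmem _).2 ⟨m, hm, rfl⟩, by simpa only [hdec] using hmm⟩

lemma SepPartition.map {V W : Type*} [DecidableEq V] [DecidableEq W] (f : W ↪ V)
    (G : SimpleGraph V) {s : Finset W} {F : Finset (Finset W)}
    (h : SepPartition (G.comap f) s F) :
    SepPartition G (s.map f) (F.image (Finset.map f)) := by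
  obtain ⟨h1, h2, h3⟩ := h
  refine ⟨?_, ?_, ?_⟩
  · intro Q hQ
    obtain ⟨Q₀, hQ₀, rfl⟩ := Finset.mem_image.1 hQ
    obtain ⟨a, b, c⟩ := h1 Q₀ hQ₀
    refine ⟨Finset.map_subset_map.2 a, by simpa using b, ?_⟩
    intro u hu w hw huw
    obtain ⟨x, hx, rfl⟩ := Finset.mem_map.1 hu
    obtain ⟨y, hy, rfl⟩ := Finset.mem_map.1 hw
    exact c x hx y hy (by rintro rfl; exact huw rfl)
  · intro u hu w hw huw
    obtain ⟨x, hx, rfl⟩ := Finset.mem_map.1 hu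
    obtain ⟨y, hy, rfl⟩ := Finset.mem_map.1 hw
    obtain ⟨Q, hQ, hm, hu'⟩ := h2 x hx y hy huw
    refine ⟨Q.map f, Finset.mem_image_of_mem _ hQ, by simpa using hm, ?_⟩
    intro Q' hQ' h5 h6
    obtain ⟨Q₀, hQ₀, rfl⟩ := Finset.mem_image.1 hQ'
    rw [hu' Q₀ hQ₀ (by simpa using h5) (by simpa using h6)]
  · intro u hu w hw huw
    obtain ⟨x, hx, rfl⟩ := Finset.mem_map.1 hu
    obtain ⟨y, hy, rfl⟩ := Finset.mem_map.1 hw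
    obtain ⟨Q, hQ, hm⟩ := h3 x hx y hy (by rintro rfl; exact huw rfl)
    exact ⟨Q.map f, Finset.mem_image_of_mem _ hQ, by simpa using hm⟩

lemma exists_sepPartition_card_four {V : Type*} [DecidableEq V] (G : SimpleGraph V)
    (s : Finset V) (hs : s.card = 4) : ∃ F, F.card ≤ 4 ∧ SepPartition G s F := by
  let e : Fin 4 ≃ s := (s.equivFinOfCardEq hs).symm
  let f : Fin 4 ↪ V := e.toEmbedding.trans (Function.Embedding.subtype _)
  have hf : (Finset.univ : Finset (Fin 4)).map f = s := by
    ext x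
    simp only [Finset.mem_map, Finset.mem_univ, true_and]
    constructor
    · rintro ⟨i, rfl⟩
      exact (e i).2
    · intro hx
      exact ⟨e.symm ⟨x, hx⟩, by simp [f]⟩
  obtain ⟨F, hF, h⟩ := exists_sepPartition_fin_four (G.comap f)
  refine ⟨F.image (Finset.map f), Finset.card_image_le.trans hF, ?_⟩
  rw [← hf]
  exact h.map f G

/-! ### Matchings in the neighbourhood of a vertex of minimum degree -/

/-- A matching, given by disjoint pairs, is grown greedily: fewer than `r` pairs cover at most
`2 * r - 2` vertices, so a vertex outside them has a neighbour outside them. -/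
lemma exists_matching {V : Type*} [DecidableEq V] (G : SimpleGraph V) [DecidableRel G.Adj]
    (N : Finset V) (r : ℕ) (hN : 1 ≤ r → N.Nonempty)
    (hdeg : ∀ x ∈ N, 2 * r ≤ (N.filter (G.Adj x)).card + 1) :
    ∃ M : Finset (Finset V), M.card = r ∧
      (∀ e ∈ M, e ⊆ N ∧ e.card = 2 ∧ ∀ u ∈ e, ∀ w ∈ e, u ≠ w → G.Adj u w) ∧
      (M : Set (Finset V)).PairwiseDisjoint id := by
  induction r with
  | zero => exact ⟨∅, by simp⟩
  | succ r ih =>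
    obtain ⟨M, hM, hM1, hM2⟩ := ih (fun _ => hN (by omega))
      (fun x hx => by have := hdeg x hx; omega)
    have hC : (M.biUnion id).card = 2 * r := by
      rw [Finset.card_biUnion hM2, Finset.sum_congr rfl (f := fun e => (id e).card) (g := fun _ => 2)
        (fun e he => (hM1 e he).2.1)]
      simp [hM, mul_comm]
    obtain ⟨z, hz⟩ := hN (by omega)
    have hNcard : 2 * r < N.card := by
      have h1 := hdeg z hz
      have h2 : N.filter (G.Adj z) ⊆ N.erase z := by
        intro y hy
        rw [Finset.mem_filter] at hy
        exact Finset.mem_erase.2 ⟨hy.2.ne', hy.1⟩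
      have h3 := Finset.card_le_card h2
      rw [Finset.card_erase_of_mem hz] at h3
      omega
    obtain ⟨x, hxN, hxC⟩ := Finset.exists_mem_notMem_of_card_lt_card (hC ▸ hNcard)
    have hx := hdeg x hxN
    obtain ⟨y, hy, hyC⟩ := Finset.exists_mem_notMem_of_card_lt_card
      (s := M.biUnion id) (t := N.filter (G.Adj x)) (by omega)
    rw [Finset.mem_filter] at hy
    have hdis : ∀ e ∈ M, x ∉ e ∧ y ∉ e := by
      intro e he
      exact ⟨fun h => hxC (Finset.mem_biUnion.2 ⟨e, he, h⟩),
        fun h => hyC (Finset.mem_biUnion.2 ⟨e, he, h⟩)⟩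
    refine ⟨insert {x, y} M, ?_, ?_, ?_⟩
    · rw [Finset.card_insert_of_notMem, hM]
      exact fun h => (hdis _ h).1 (by simp)
    · intro e he
      rcases Finset.mem_insert.1 he with rfl | he
      · refine ⟨?_, Finset.card_pair hy.2.ne, ?_⟩
        · intro a ha
          simp only [Finset.mem_insert, Finset.mem_singleton] at ha
          rcases ha with rfl | rfl
          exacts [hxN, hy.1]
        · intro a ha b hb hab
          simp only [Finset.mem_insert, Finset.mem_singleton] at ha hb
          rcases ha with rfl | rfl <;> rcases hb with rfl | rfl
          exacts [absurd rfl hab, hy.2, hy.2.symm, absurd rfl hab]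
      · exact hM1 e he
    · rw [Finset.coe_insert]
      refine hM2.insert ?_
      intro e he _
      have := hdis e he
      simp [this.1, this.2]

/-- In the graph induced on a set `s` of `n` vertices, the neighbourhood of a vertex of minimum
degree can be partitioned into at most `⌊n / 2⌋`
single vertices and edges. -/
lemma exists_nbhd_partition {V : Type*} [DecidableEq V] (G : SimpleGraph V) [DecidableRel G.Adj]
    (s : Finset V) (v : V) (hv : v ∈ s)
    (hmin : ∀ x ∈ s, (s.filter (G.Adj v)).card ≤ (s.filter (G.Adj x)).card) :
    ∃ P : Finset (Finset V), P.card ≤ s.card / 2 ∧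
      (∀ e ∈ P, e ⊆ s.filter (G.Adj v) ∧ e.Nonempty ∧ e.card ≤ 2 ∧
        ∀ u ∈ e, ∀ w ∈ e, u ≠ w → G.Adj u w) ∧
      (∀ x ∈ s.filter (G.Adj v), ∃ e ∈ P, x ∈ e) ∧
      (∀ e ∈ P, ∀ e' ∈ P, ∀ x, x ∈ e → x ∈ e' → e = e') := by
  set N := s.filter (G.Adj v) with hN
  have hNs : N ⊆ s := Finset.filter_subset _ _
  have hNlt : N.card < s.card := Finset.card_lt_card
    ⟨hNs, fun h => by simpa [hN] using h hv⟩
  have hdeg : ∀ x ∈ N, 2 * N.card ≤ (N.filter (G.Adj x)).card + s.card := by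
    intro x hx
    have h1 : s.filter (G.Adj x) ⊆ N.filter (G.Adj x) ∪ (s \ N) := by
      intro y hy
      rw [Finset.mem_filter] at hy
      by_cases h : y ∈ N <;> simp [h, hy.1, hy.2]
    have h2 := (Finset.card_le_card h1).trans (Finset.card_union_le _ _)
    have h3 := hmin x (hNs hx)
    have h4 := Finset.card_sdiff_add_card_eq_card hNs
    omega
  obtain ⟨M, hM, hM1, hM2⟩ := exists_matching G N (N.card - s.card / 2)
    (fun h => Finset.card_pos.1 (by omega)) (fun x hx => by have := hdeg x hx; omega)
  have hC : (M.biUnion id).card = 2 * (N.card - s.card / 2) := by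
    rw [Finset.card_biUnion hM2, Finset.sum_congr rfl (f := fun e => (id e).card) (g := fun _ => 2)
      (fun e he => (hM1 e he).2.1)]
    simp [hM, mul_comm]
  have hCN : M.biUnion id ⊆ N := Finset.biUnion_subset.2 fun e he => (hM1 e he).1
  have hcard := Finset.card_sdiff_add_card_eq_card hCN
  refine ⟨M ∪ (N \ M.biUnion id).image (fun x => {x}), ?_, ?_, ?_, ?_⟩
  · have h1 := Finset.card_union_le M ((N \ M.biUnion id).image (fun x => {x}))
    have h2 := Finset.card_image_le (s := N \ M.biUnion id) (f := fun x => ({x} : Finset V))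
    omega
  · intro e he
    rcases Finset.mem_union.1 he with he | he
    · obtain ⟨a, b, c⟩ := hM1 e he
      exact ⟨a, Finset.card_pos.1 (by omega), b.le, c⟩
    · obtain ⟨x, hx, rfl⟩ := Finset.mem_image.1 he
      refine ⟨by simpa using (Finset.mem_sdiff.1 hx).1, by simp, by simp, ?_⟩
      intro u hu w hw huw
      rw [Finset.mem_singleton] at hu hw
      exact absurd (hu.trans hw.symm) huw
  · intro x hx
    by_cases h : x ∈ M.biUnion id
    · obtain ⟨e, he, hxe⟩ := Finset.mem_biUnion.1 h
      exact ⟨e, Finset.mem_union_left _ he, hxe⟩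
    · exact ⟨{x}, Finset.mem_union_right _
        (Finset.mem_image_of_mem _ (Finset.mem_sdiff.2 ⟨hx, h⟩)), by simp⟩
  · have key : ∀ e ∈ M, ∀ z ∈ N \ M.biUnion id, z ∉ e := fun e he z hz hze =>
      (Finset.mem_sdiff.1 hz).2 (Finset.mem_biUnion.2 ⟨e, he, hze⟩)
    intro e he e' he' x hx hx'
    rcases Finset.mem_union.1 he with he | he <;> rcases Finset.mem_union.1 he' with he' | he'
    · by_contra hne
      exact Finset.disjoint_left.1 (hM2 he he' hne) hx hx'
    · obtain ⟨z, hz, rfl⟩ := Finset.mem_image.1 he'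
      rw [Finset.mem_singleton] at hx'
      exact absurd (hx' ▸ hx) (key e he z hz)
    · obtain ⟨z, hz, rfl⟩ := Finset.mem_image.1 he
      rw [Finset.mem_singleton] at hx
      exact absurd (hx ▸ hx') (key e' he' z hz)
    · obtain ⟨z, hz, rfl⟩ := Finset.mem_image.1 he
      obtain ⟨z', hz', rfl⟩ := Finset.mem_image.1 he'
      rw [Finset.mem_singleton] at hx hx'
      rw [← hx, ← hx']

/-! ### The induction -/

/-- The graph `G` with all edges inside members of `P` removed. -/
def deleteInside {V : Type*} (G : SimpleGraph V) (P : Finset (Finset V)) : SimpleGraph V where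
  Adj u w := G.Adj u w ∧ ∀ e ∈ P, ¬(u ∈ e ∧ w ∈ e)
  symm := ⟨fun _ _ h => ⟨h.1.symm, fun e he h' => h.2 e he h'.symm⟩⟩
  loopless := ⟨fun _ h => h.1.ne rfl⟩

/-- A separating clique partition of `G - v`, without the edges inside the parts of a partition
`P` of the neighbourhood of `v`, extends to `G`: each part of `P` is joined to `v`. If `P` has at
most one part, the clique `{v}` is needed as well, to separate `v` from its neighbours and from
a vertex that lies in no clique. -/
lemma SepPartition.extend {V : Type*} [DecidableEq V] (G : SimpleGraph V) [DecidableRel G.Adj]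
    (s : Finset V) (v : V) (hv : v ∈ s) (P F : Finset (Finset V))
    (hP : ∀ e ∈ P, e ⊆ s.filter (G.Adj v) ∧ e.Nonempty ∧ e.card ≤ 2 ∧
        ∀ u ∈ e, ∀ w ∈ e, u ≠ w → G.Adj u w)
    (hcov : ∀ x ∈ s.filter (G.Adj v), ∃ e ∈ P, x ∈ e)
    (hdis : ∀ e ∈ P, ∀ e' ∈ P, ∀ x, x ∈ e → x ∈ e' → e = e')
    (hF : SepPartition (deleteInside G P) (s.erase v) F) :
    SepPartition G s (P.image (insert v) ∪ F ∪ if P.card ≤ 1 then {{v}} else ∅) := by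
  obtain ⟨h1, h2, h3⟩ := hF
  have hmem : ∀ Q, Q ∈ (P.image (insert v) ∪ F ∪ if P.card ≤ 1 then {{v}} else ∅) ↔
      (∃ e ∈ P, insert v e = Q) ∨ Q ∈ F ∨ (P.card ≤ 1 ∧ Q = {v}) := by
    intro Q
    split_ifs with h <;> simp [h, -Finset.union_singleton]
  have hPadj : ∀ e ∈ P, ∀ x ∈ e, x ∈ s ∧ G.Adj v x := fun e he x hx =>
    Finset.mem_filter.1 ((hP e he).1 hx)
  have hvF : ∀ Q ∈ F, v ∉ Q := fun Q hQ h => by simpa using (h1 Q hQ).1 h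
  -- an edge at `v` lies in the clique coming from the part that contains its other end
  have hvedge : ∀ w ∈ s, G.Adj v w → ∃ e ∈ P, w ∈ insert v e ∧
      ∀ Q', ((∃ e ∈ P, insert v e = Q') ∨ Q' ∈ F ∨ (P.card ≤ 1 ∧ Q' = {v})) →
        v ∈ Q' → w ∈ Q' → Q' = insert v e := by
    intro w hw hvw
    obtain ⟨e, he, hwe⟩ := hcov w (Finset.mem_filter.2 ⟨hw, hvw⟩)
    refine ⟨e, he, Finset.mem_insert_of_mem hwe, ?_⟩
    rintro Q' (⟨e', he', rfl⟩ | hQ' | ⟨-, rfl⟩) hv' hw'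
    · rw [hdis e he e' he' w hwe ((Finset.mem_insert.1 hw').resolve_left hvw.ne')]
    · exact absurd hv' (hvF _ hQ')
    · exact absurd (Finset.mem_singleton.1 hw') hvw.symm.ne
  have hvsep : ∀ w, w ≠ v →
      ∃ Q, ((∃ e ∈ P, insert v e = Q) ∨ Q ∈ F ∨ (P.card ≤ 1 ∧ Q = {v})) ∧ v ∈ Q ∧ w ∉ Q := by
    intro w hwv
    by_cases hc : P.card ≤ 1
    · exact ⟨{v}, Or.inr (Or.inr ⟨hc, rfl⟩), by simp, by simpa using hwv⟩
    · obtain ⟨e, he, e', he', hne⟩ := Finset.one_lt_card.1 (not_le.1 hc)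
      by_cases hwe : w ∈ e
      · refine ⟨insert v e', Or.inl ⟨e', he', rfl⟩, by simp, ?_⟩
        simp only [Finset.mem_insert, hwv, false_or]
        exact fun h => hne (hdis e he e' he' w hwe h)
      · exact ⟨insert v e, Or.inl ⟨e, he, rfl⟩, by simp, by simp [hwv, hwe]⟩
  refine ⟨?_, ?_, ?_⟩
  · intro Q hQ
    rcases (hmem Q).1 hQ with ⟨e, he, rfl⟩ | hQ | ⟨-, rfl⟩
    · obtain ⟨-, -, hc, hq⟩ := hP e he
      refine ⟨Finset.insert_subset hv fun x hx => (hPadj e he x hx).1,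
        (Finset.card_insert_le _ _).trans (by omega), ?_⟩
      intro u hu w hw huw
      rcases Finset.mem_insert.1 hu with hu' | hu' <;>
        rcases Finset.mem_insert.1 hw with hw' | hw'
      · exact absurd (hu'.trans hw'.symm) huw
      · exact hu' ▸ (hPadj e he w hw').2
      · exact hw' ▸ (hPadj e he u hu').2.symm
      · exact hq u hu' w hw' huw
    · obtain ⟨a, b, c⟩ := h1 Q hQ
      exact ⟨a.trans (Finset.erase_subset _ _), b, fun u hu w hw huw => (c u hu w hw huw).1⟩
    · refine ⟨by simpa using hv, by simp, ?_⟩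
      intro u hu w hw huw
      rw [Finset.mem_singleton] at hu hw
      exact absurd (hu.trans hw.symm) huw
  · intro u hu w hw huw
    simp only [hmem]
    by_cases huv : u = v
    · subst huv
      obtain ⟨e, he, hwe, huniq⟩ := hvedge w hw huw
      exact ⟨insert u e, Or.inl ⟨e, he, rfl⟩, ⟨by simp, hwe⟩, huniq⟩
    by_cases hwv : w = v
    · subst hwv
      obtain ⟨e, he, hue, huniq⟩ := hvedge u hu huw.symm
      exact ⟨insert w e, Or.inl ⟨e, he, rfl⟩, ⟨hue, by simp⟩,
        fun Q' hQ' ha hb => huniq Q' hQ' hb ha⟩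
    by_cases hin : ∃ e ∈ P, u ∈ e ∧ w ∈ e
    · obtain ⟨e, he, hue, hwe⟩ := hin
      refine ⟨insert v e, Or.inl ⟨e, he, rfl⟩, ⟨by simp [hue], by simp [hwe]⟩, ?_⟩
      rintro Q' (⟨e', he', rfl⟩ | hQ' | ⟨-, rfl⟩) hu' hw'
      · rw [hdis e he e' he' u hue ((Finset.mem_insert.1 hu').resolve_left huv)]
      · exact absurd ⟨hue, hwe⟩ (((h1 Q' hQ').2.2 u hu' w hw' huw.ne).2 e he)
      · exact absurd (Finset.mem_singleton.1 hu') huv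
    · push Not at hin
      obtain ⟨Q, hQ, hm, huniq⟩ := h2 u (Finset.mem_erase.2 ⟨huv, hu⟩) w
        (Finset.mem_erase.2 ⟨hwv, hw⟩) ⟨huw, fun e he h => hin e he h.1 h.2⟩
      refine ⟨Q, Or.inr (Or.inl hQ), hm, ?_⟩
      rintro Q' (⟨e', he', rfl⟩ | hQ' | ⟨-, rfl⟩) hu' hw'
      · exact absurd ((Finset.mem_insert.1 hw').resolve_left hwv)
          (hin e' he' ((Finset.mem_insert.1 hu').resolve_left huv))
      · exact huniq Q' hQ' hu' hw'
      · exact absurd (Finset.mem_singleton.1 hu') huv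
  · intro u hu w hw huw
    simp only [hmem]
    by_cases huv : u = v
    · subst huv
      obtain ⟨Q, hQ, ha, hb⟩ := hvsep w huw.symm
      exact ⟨Q, hQ, fun h => hb (h.1 ha)⟩
    by_cases hwv : w = v
    · subst hwv
      obtain ⟨Q, hQ, ha, hb⟩ := hvsep u huw
      exact ⟨Q, hQ, fun h => hb (h.2 ha)⟩
    obtain ⟨Q, hQ, hm⟩ := h3 u (Finset.mem_erase.2 ⟨huv, hu⟩) w
      (Finset.mem_erase.2 ⟨hwv, hw⟩) huw
    exact ⟨Q, Or.inr (Or.inl hQ), hm⟩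

lemma exists_sepPartition {V : Type*} [DecidableEq V] (n : ℕ) (hn : 4 ≤ n) :
    ∀ (G : SimpleGraph V) (s : Finset V), s.card = n →
      ∃ F, F.card ≤ n ^ 2 / 4 ∧ SepPartition G s F := by
  classical
  induction n, hn using Nat.le_induction with
  | base => exact fun G s hs => exists_sepPartition_card_four G s hs
  | succ n hn ih =>
    intro G s hs
    obtain ⟨v, hv, hmin⟩ := s.exists_min_image (fun x => (s.filter (G.Adj x)).card)
      (Finset.card_pos.1 (by omega))
    obtain ⟨P, hPc, hP, hcov, hdis⟩ := exists_nbhd_partition G s v hv hmin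
    obtain ⟨F, hFc, hF⟩ := ih (deleteInside G P) (s.erase v)
      (by rw [Finset.card_erase_of_mem hv, hs]; rfl)
    refine ⟨_, ?_, SepPartition.extend G s v hv P F hP hcov hdis hF⟩
    have c1 := Finset.card_union_le (P.image (insert v) ∪ F)
      (if P.card ≤ 1 then {{v}} else ∅)
    have c2 := Finset.card_union_le (P.image (insert v)) F
    have c3 := Finset.card_image_le (s := P) (f := insert v)
    have c4 : P.card + (if P.card ≤ 1 then {{v}} else ∅ : Finset (Finset V)).card
        ≤ (n + 1) / 2 := by
      rw [hs] at hPc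
      split_ifs with h
      · rw [Finset.card_singleton]
        omega
      · simpa using hPc
    -- `⌊(n + 1)² / 4⌋ = ⌊n² / 4⌋ + ⌊(n + 1) / 2⌋`
    have c5 : n ^ 2 / 4 + (n + 1) / 2 ≤ (n + 1) ^ 2 / 4 := by
      rcases Nat.even_or_odd' n with ⟨k, rfl | rfl⟩
      · have e1 : (2 * k) ^ 2 = 4 * k ^ 2 := by ring
        have e2 : (2 * k + 1) ^ 2 = 4 * (k ^ 2 + k) + 1 := by ring
        omega
      · have e1 : (2 * k + 1) ^ 2 = 4 * (k ^ 2 + k) + 1 := by ring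
        have e2 : (2 * k + 1 + 1) ^ 2 = 4 * (k ^ 2 + 2 * k + 1) := by ring
        omega
    omega

/-- For `n ≥ 4`, every simple graph on `n` vertices has a clique partition
`Q₁, …, Q_N` of its edge set with `N ≤ ⌊n²/4⌋`, each clique having at most 3
vertices, such that distinct vertices have distinct clique-incidence index sets. -/
theorem stmt_1 (n : ℕ) (hn : 4 ≤ n) (G : SimpleGraph (Fin n)) :
    ∃ (N : ℕ) (Q : Fin N → Finset (Fin n)),
      N ≤ n ^ 2 / 4 ∧
      (∀ i, G.IsClique (Q i : Set (Fin n)) ∧ (Q i).card ≤ 3) ∧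
      (∀ u v : Fin n, G.Adj u v → ∃! i, u ∈ Q i ∧ v ∈ Q i) ∧
      (∀ u v : Fin n, u ≠ v → {i | u ∈ Q i} ≠ {i | v ∈ Q i}) := by
  obtain ⟨F, hF, h1, h2, h3⟩ := exists_sepPartition n hn G Finset.univ (by simp)
  refine ⟨F.card, fun i => (F.equivFin.symm i : Finset (Fin n)), hF, ?_, ?_, ?_⟩
  · intro i
    obtain ⟨-, hc, hq⟩ := h1 _ (F.equivFin.symm i).2
    exact ⟨fun u hu w hw huw => hq u hu w hw huw, hc⟩
  · intro u v huv
    obtain ⟨Q, hQ, hm, huniq⟩ := h2 u (by simp) v (by simp) huv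
    refine ⟨F.equivFin ⟨Q, hQ⟩, by simpa using hm, ?_⟩
    intro i hi
    rw [← Equiv.symm_apply_eq]
    exact Subtype.ext (huniq _ (F.equivFin.symm i).2 hi.1 hi.2)
  · intro u v huv heq
    obtain ⟨Q, hQ, hm⟩ := h3 u (by simp) v (by simp) huv
    have := Set.ext_iff.1 heq (F.equivFin ⟨Q, hQ⟩)
    exact hm (by simpa using this)
end

section
/- For every finite simple graph G, the multifamily intersection number of G equals the clique partition number of G; that is, the minimum cardinality of a ground set X for which there is an assignment of a nonempty finite subset S_v ⊆ X to each vertex v with |S_u ∩ S_v| = 1 whenever u and v are distinct adjacent vertices and |S_u ∩ S_v| = 0 whenever u and v are distinct non-adjacent vertices, equals the minimum cardinality of a collection of cliques of G such that every edge of G lies in exactly one clique of the collection and every vertex of G lies in at least one clique of the collection. -/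
/-!
Representations and clique partitions are dual descriptions of one incidence relation between
vertices and points/cliques. A representation `S` on `X` yields the cliques `{v | x ∈ S v}`,
`x ∈ X`: two adjacent vertices share exactly one point, hence exactly one such clique. Distinct
points can only yield the same clique when it has at most one vertex, and empty cliques are dropped,
so the number of cliques is at most `|X|`. Conversely, a clique partition `Q` is
itself a ground set (encoded in `ℕ`), with `S v` the set of members of `Q` containing `v`.

Each index set therefore dominates the other from below, which gives equality of the infima.
-/

lemma sInf_le_sInf_of_dominated {A B : Set ℕ} (hAB : ∀ a ∈ A, ∃ b ∈ B, b ≤ a)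
    (hA : A.Nonempty) : sInf B ≤ sInf A := by
  obtain ⟨b, hb, hle⟩ := hAB _ (Nat.sInf_mem hA)
  exact (Nat.sInf_le hb).trans hle

/-- No nonemptiness is assumed: if one set is empty then so is the other, and both infima take
the default value `0`. -/
lemma sInf_eq_sInf_of_dominated {A B : Set ℕ} (hAB : ∀ a ∈ A, ∃ b ∈ B, b ≤ a)
    (hBA : ∀ b ∈ B, ∃ a ∈ A, a ≤ b) : sInf A = sInf B := by
  rcases A.eq_empty_or_nonempty with rfl | hA
  · rcases B.eq_empty_or_nonempty with rfl | ⟨b, hb⟩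
    · rfl
    · obtain ⟨a, ha, -⟩ := hBA b hb
      exact ha.elim
  · have hB : B.Nonempty := by
      obtain ⟨a, ha⟩ := hA
      obtain ⟨b, hb, -⟩ := hAB a ha
      exact ⟨b, hb⟩
    exact le_antisymm (sInf_le_sInf_of_dominated hBA hB) (sInf_le_sInf_of_dominated hAB hA)

/-- The multifamily intersection number of a finite simple graph equals its
clique partition number. -/
theorem stmt_2 {V : Type*} [Fintype V] [DecidableEq V] (G : SimpleGraph V) :
    sInf {k : ℕ | ∃ (X : Finset ℕ) (S : V → Finset ℕ),
        X.card = k ∧ (∀ v, (S v).Nonempty ∧ S v ⊆ X) ∧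
        (∀ u v : V, u ≠ v →
          (G.Adj u v → (S u ∩ S v).card = 1) ∧ (¬ G.Adj u v → (S u ∩ S v).card = 0))} =
    sInf {k : ℕ | ∃ Q : Finset (Finset V), Q.card = k ∧
        (∀ C ∈ Q, G.IsClique (C : Set V) ∧ C.Nonempty) ∧
        (∀ u v : V, G.Adj u v → ∃! C, C ∈ Q ∧ u ∈ C ∧ v ∈ C) ∧
        (∀ v : V, ∃ C ∈ Q, v ∈ C)} := by
  apply sInf_eq_sInf_of_dominated
  · rintro k ⟨X, S, rfl, hS, hG⟩
    let C : ℕ → Finset V := fun x => Finset.univ.filter fun v => x ∈ S v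
    have hC : ∀ x v, v ∈ C x ↔ x ∈ S v := by simp [C]
    refine ⟨_, ⟨(X.image C).filter Finset.Nonempty, rfl, ?_, ?_, ?_⟩,
      (Finset.card_filter_le _ _).trans Finset.card_image_le⟩
    · intro D hD
      obtain ⟨hD, hne⟩ := Finset.mem_filter.1 hD
      obtain ⟨x, -, rfl⟩ := Finset.mem_image.1 hD
      refine ⟨fun u hu v hv huv => ?_, hne⟩
      by_contra hadj
      have h0 := Finset.card_eq_zero.1 ((hG u v huv).2 hadj)
      have hx : x ∈ S u ∩ S v :=
        Finset.mem_inter.2 ⟨(hC x u).1 hu, (hC x v).1 hv⟩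
      simp [h0] at hx
    · intro u v huv
      obtain ⟨x, hx⟩ := Finset.card_eq_one.1 ((hG u v huv.ne).1 huv)
      have hmem : ∀ y, y ∈ S u ∧ y ∈ S v ↔ y = x := fun y => by
        rw [← Finset.mem_inter, hx, Finset.mem_singleton]
      obtain ⟨hxu, hxv⟩ := (hmem x).2 rfl
      refine ⟨C x, ⟨Finset.mem_filter.2 ⟨Finset.mem_image_of_mem C ((hS u).2 hxu),
        u, (hC x u).2 hxu⟩, (hC x u).2 hxu, (hC x v).2 hxv⟩, ?_⟩
      rintro D ⟨hD, hu, hv⟩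
      obtain ⟨y, -, rfl⟩ := Finset.mem_image.1 (Finset.mem_filter.1 hD).1
      rw [(hmem y).1 ⟨(hC y u).1 hu, (hC y v).1 hv⟩]
    · intro v
      obtain ⟨x, hx⟩ := (hS v).1
      exact ⟨C x, Finset.mem_filter.2 ⟨Finset.mem_image_of_mem C ((hS v).2 hx),
        v, (hC x v).2 hx⟩, (hC x v).2 hx⟩
  · rintro k ⟨Q, rfl, hQ, hE, hV⟩
    -- The ground set must consist of natural numbers, so the finitely many vertex sets are numbered.
    let e : Finset V ↪ ℕ := (Fintype.equivFin (Finset V)).toEmbedding.trans Fin.valEmbedding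
    refine ⟨_, ⟨Q.map e, fun v => (Q.filter (v ∈ ·)).map e, Finset.card_map e, ?_, ?_⟩, le_rfl⟩
    · intro v
      obtain ⟨D, hD, hv⟩ := hV v
      exact ⟨(Finset.map_nonempty).2 ⟨D, Finset.mem_filter.2 ⟨hD, hv⟩⟩,
        Finset.map_subset_map.2 (Finset.filter_subset _ _)⟩
    · intro u v huv
      rw [← Finset.map_inter, Finset.card_map]
      constructor
      · intro hadj
        obtain ⟨D, ⟨hD, hu, hv⟩, huniq⟩ := hE u v hadj
        refine Finset.card_eq_one.2 ⟨D, Finset.ext fun D' => ?_⟩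
        simp only [Finset.mem_inter, Finset.mem_filter, Finset.mem_singleton]
        constructor
        · rintro ⟨⟨h, h1⟩, -, h2⟩
          exact huniq D' ⟨h, h1, h2⟩
        · rintro rfl
          exact ⟨⟨hD, hu⟩, hD, hv⟩
      · intro hadj
        refine Finset.card_eq_zero.2 (Finset.eq_empty_of_forall_notMem fun D hD => hadj ?_)
        simp only [Finset.mem_inter, Finset.mem_filter] at hD
        exact (hQ D hD.1.1).1 hD.1.2 hD.2.2 huv
end

section
/- For every simple graph G on n ≥ 4 vertices, the intersection number of G is at most ⌊n²/4⌋; that is, there exist a ground set X with |X| ≤ ⌊n²/4⌋ and an injective assignment of a nonempty set S_v ⊆ X to each vertex v (so that the sets S_v are pairwise distinct) such that for distinct vertices u, v, |S_u ∩ S_v| = 1 if u and v are adjacent and |S_u ∩ S_v| = 0 otherwise. -/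
/-!
The proof is by induction on the number `m` of vertices, with base `m = 4`; the step from `m` to
`m + 1` may use `⌊(m+1)²/4⌋ - ⌊m²/4⌋ = ⌊(m+1)/2⌋ =: k` new ground elements.

Let `v` be a vertex of minimum degree `δ`. The neighbourhood of `v` can be partitioned into at most
`k` cliques (`exists_clique_partition`): if `δ ≤ k` take singletons, and otherwise the complement
of `G` has maximum degree `m - δ < k`, so it is greedily `k`-colourable. Delete `v` together with
all edges inside the cliques, represent the remaining graph by induction, and add one new element
per clique, which is put into the sets of the vertices of that clique and of `v`
(`HasRep.extend`). The deleted edges are met exactly once by the new elements, and the sets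
stay distinct because their old parts are distinct and nonempty while the set of `v` has only new
elements.

For `m = 4` there are 64 labelled graphs and a ground set of 4 elements; subsets are encoded as
binary numerals below 16, and the kernel evaluates a backtracking search.
-/

/-- `G` has a distinct-set representation on a ground set of at most `k` elements. The ground set is
a finite type `α`, and `S v x` says that `x` belongs to the set of the vertex `v`. -/
def HasRep {V : Type} (G : SimpleGraph V) (k : ℕ) : Prop :=
  ∃ (α : Type) (_ : Fintype α) (S : V → α → Prop),
    Fintype.card α ≤ k ∧ Function.Injective S ∧ (∀ v, ∃ x, S v x) ∧
    ∀ u v, u ≠ v → (G.Adj u v → ∃! x, S u x ∧ S v x) ∧ (¬ G.Adj u v → ∀ x, ¬ (S u x ∧ S v x))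

/-- Greedy colouring: a graph all of whose degrees are less than `k` is `k`-colourable. -/
lemma exists_greedy_coloring {V : Type} [Fintype V] (H : SimpleGraph V) [DecidableRel H.Adj]
    (k : ℕ) (hk : ∀ v, H.degree v < k) :
    ∃ f : V → Fin k, ∀ a b, H.Adj a b → f a ≠ f b := by
  classical
  suffices h : ∀ s : Finset V, ∃ f : V → Fin k, ∀ a ∈ s, ∀ b ∈ s, H.Adj a b → f a ≠ f b by
    obtain ⟨f, hf⟩ := h Finset.univ
    exact ⟨f, fun a b => hf a (Finset.mem_univ _) b (Finset.mem_univ _)⟩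
  intro s
  induction s using Finset.induction_on with
  | empty => exact ⟨fun v => ⟨0, (Nat.zero_le _).trans_lt (hk v)⟩, by simp⟩
  | insert v s hv ih =>
    obtain ⟨f, hf⟩ := ih
    obtain ⟨c, hc⟩ : ∃ c, c ∉ (H.neighborFinset v).image f := by
      by_contra! hall
      have h1 := Finset.card_le_card (fun c _ => hall c : (Finset.univ : Finset (Fin k)) ⊆ _)
      have h2 := (h1.trans Finset.card_image_le).trans_lt (hk v)
      simp at h2
    have hc' : ∀ w, H.Adj v w → f w ≠ c := by
      intro w hw he
      exact hc (Finset.mem_image.2 ⟨w, by simpa using hw, he⟩)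
    refine ⟨Function.update f v c, ?_⟩
    intro a ha b hb hab
    have hne := hab.ne
    by_cases hav : a = v
    · subst hav
      rw [Function.update_self, Function.update_of_ne hne.symm]
      exact (hc' b hab).symm
    · by_cases hbv : b = v
      · subst hbv
        rw [Function.update_self, Function.update_of_ne hne]
        exact hc' a hab.symm
      · rw [Function.update_of_ne hav, Function.update_of_ne hbv]
        exact hf a (Finset.mem_of_mem_insert_of_ne ha hav) b
          (Finset.mem_of_mem_insert_of_ne hb hbv) hab

/-- The neighbourhood of some vertex `v` (one of minimum degree) splits into at most `k` cliques,
for any positive `k` with `⌊|V|/2⌋ ≤ k`. The cliques are the fibres of `f` inside the neighbourhood. -/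
lemma exists_clique_partition {V : Type} [Fintype V] (G : SimpleGraph V) (k : ℕ)
    (hk : 0 < k) (hcard : Fintype.card V ≤ 2 * k + 1) (hV : 0 < Fintype.card V) :
    ∃ (v : V) (f : V → Fin k), ∀ a b, G.Adj v a → G.Adj v b → a ≠ b → f a = f b → G.Adj a b := by
  classical
  have : Nonempty V := Fintype.card_pos_iff.1 hV
  obtain ⟨v, hv⟩ := G.exists_minimal_degree_vertex
  refine ⟨v, ?_⟩
  by_cases hd : G.degree v ≤ k
  · have : Nonempty (Fin k) := ⟨⟨0, hk⟩⟩
    obtain ⟨f, -, hf⟩ := (Set.toFinite (G.neighborSet v)).exists_injOn_of_encard_le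
      (t := (Set.univ : Set (Fin k))) (by
        rw [← SimpleGraph.coe_neighborFinset, Set.encard_coe_eq_coe_finsetCard]
        simpa using hd)
    exact ⟨f, fun a b ha hb hne he => absurd (hf ha hb he) hne⟩
  · obtain ⟨f, hf⟩ := exists_greedy_coloring Gᶜ k (by
      intro w
      have h1 := G.minDegree_le_degree w
      have h2 := G.degree_compl w
      omega)
    refine ⟨f, fun a b _ _ hne he => ?_⟩
    by_contra hab
    exact hf a b ((SimpleGraph.compl_adj _ _ _).2 ⟨hne, hab⟩) he

/-- Adding back the vertex `v` at the cost of one new element per clique of its neighbourhood, where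
the edges inside these cliques are absent from the graph represented so far. -/
lemma HasRep.extend {V : Type} {G : SimpleGraph V} {v : V} {k l : ℕ} (hk : 0 < k)
    (f : V → Fin k) (hf : ∀ a b, G.Adj v a → G.Adj v b → a ≠ b → f a = f b → G.Adj a b)
    {G' : SimpleGraph {x : V // x ≠ v}}
    (hG' : ∀ a b, G'.Adj a b ↔
      G.Adj a.1 b.1 ∧ ¬ (G.Adj v a.1 ∧ G.Adj v b.1 ∧ f a.1 = f b.1))
    (h : HasRep G' l) : HasRep G (l + k) := by
  obtain ⟨α, _, S, hcard, hinj, hne, hS⟩ := h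
  -- The set of `v` consists of all new elements, including those of empty cliques.
  let T : V → α ⊕ Fin k → Prop := fun u x =>
    Sum.elim (fun y => ∃ h : u ≠ v, S ⟨u, h⟩ y) (fun j => u = v ∨ (G.Adj v u ∧ f u = j)) x
  have hTl : ∀ u y, T u (Sum.inl y) ↔ ∃ h : u ≠ v, S ⟨u, h⟩ y := fun _ _ => Iff.rfl
  have hTr : ∀ u j, T u (Sum.inr j) ↔ (u = v ∨ (G.Adj v u ∧ f u = j)) := fun _ _ => Iff.rfl
  have hv : ∀ u, u ≠ v → (G.Adj v u → ∃! x, T v x ∧ T u x) ∧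
      (¬ G.Adj v u → ∀ x, ¬ (T v x ∧ T u x)) := by
    intro u hu
    refine ⟨fun ha => ⟨Sum.inr (f u), ?_, ?_⟩, fun ha => ?_⟩
    · simp [hTr, ha]
    · rintro (y | j) <;> simp [hTl, hTr, hu]
      rintro - rfl
      rfl
    · rintro (y | j) <;> simp [hTl, hTr, hu, ha]
  refine ⟨α ⊕ Fin k, inferInstance, T, by simpa using hcard, ?_, ?_, ?_⟩
  · have key : ∀ u, u ≠ v → T u ≠ T v := by
      intro u hu he
      obtain ⟨y, hy⟩ := hne ⟨u, hu⟩
      have h1 : T u (Sum.inl y) := ⟨hu, hy⟩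
      rw [he] at h1
      exact h1.1 rfl
    intro u w he
    by_cases hu : u = v
    · by_contra hw
      subst hu
      exact key w (Ne.symm hw) he.symm
    by_cases hw : w = v
    · subst hw
      exact absurd he (key u hu)
    have h1 : S ⟨u, hu⟩ = S ⟨w, hw⟩ := by
      funext y
      have h2 := congrFun he (Sum.inl y)
      have h3 := hTl u y
      have h4 := hTl w y
      rw [h2] at h3
      exact propext ⟨fun hy => (h4.1 (h3.2 ⟨hu, hy⟩)).2, fun hy => (h3.1 (h4.2 ⟨hw, hy⟩)).2⟩
    exact congrArg Subtype.val (hinj h1)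
  · intro u
    by_cases hu : u = v
    · exact ⟨Sum.inr ⟨0, hk⟩, Or.inl hu⟩
    · obtain ⟨y, hy⟩ := hne ⟨u, hu⟩
      exact ⟨Sum.inl y, hu, hy⟩
  · intro u w huw
    by_cases hu : u = v
    · subst hu
      exact hv w huw.symm
    by_cases hw : w = v
    · subst hw
      simpa only [G.adj_comm, and_comm] using hv u huw
    have hS' := hS ⟨u, hu⟩ ⟨w, hw⟩ (by simpa using huw)
    rw [hG'] at hS'
    have hl : ∀ y, (T u (Sum.inl y) ∧ T w (Sum.inl y)) ↔ S ⟨u, hu⟩ y ∧ S ⟨w, hw⟩ y := by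
      intro y
      simp [hTl, hu, hw]
    have hr : ∀ j, (T u (Sum.inr j) ∧ T w (Sum.inr j)) ↔
        (G.Adj v u ∧ f u = j) ∧ (G.Adj v w ∧ f w = j) := by
      intro j
      simp [hTr, hu, hw]
    by_cases hc : G.Adj v u ∧ G.Adj v w ∧ f u = f w
    · have hadj := hf u w hc.1 hc.2.1 huw hc.2.2
      refine ⟨fun _ => ⟨Sum.inr (f u), (hr _).2 ⟨⟨hc.1, rfl⟩, hc.2.1, hc.2.2.symm⟩, ?_⟩,
        fun h => absurd hadj h⟩
      rintro (y | j) hx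
      · exact absurd ((hl y).1 hx) (hS'.2 (fun h => h.2 hc) y)
      · rw [((hr j).1 hx).1.2]
    · have hnr : ∀ j, ¬ (T u (Sum.inr j) ∧ T w (Sum.inr j)) := by
        intro j hj
        obtain ⟨⟨h1, h2⟩, h3, h4⟩ := (hr j).1 hj
        exact hc ⟨h1, h3, h2.trans h4.symm⟩
      refine ⟨fun ha => ?_, fun ha => ?_⟩
      · obtain ⟨y, hy, hy'⟩ := hS'.1 ⟨ha, hc⟩
        refine ⟨Sum.inl y, (hl y).2 hy, ?_⟩
        rintro (z | j) hx
        · rw [hy' z ((hl z).1 hx)]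
        · exact absurd hx (hnr j)
      · rintro (y | j) hx
        · exact hS'.2 (fun h => ha h.1) y ((hl y).1 hx)
        · exact hnr j hx

/-- For subsets of `{0, 1, 2, 3}` encoded as binary numerals: distinctness, together with the
intersection being a singleton if `e` is true and empty if `e` is false. -/
def compat (e : Bool) (a b : ℕ) : Bool :=
  a != b && (if e then [1, 2, 4, 8].contains (a &&& b) else (a &&& b) == 0)

/-- The nonempty subsets of `{0, 1, 2, 3}`, as binary numerals. -/
def masks : List ℕ := [1, 2, 3, 4, 5, 6, 7, 8, 9, 10, 11, 12, 13, 14, 15]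

lemma search_four : ∀ e01 e02 e03 e12 e13 e23 : Bool,
    (masks.any fun a => masks.any fun b => compat e01 a b && masks.any fun c =>
      compat e02 a c && (compat e12 b c && masks.any fun d =>
        compat e03 a d && (compat e13 b d && compat e23 c d))) = true := by
  decide +kernel

lemma compat_comm (e : Bool) (a b : ℕ) : compat e a b = compat e b a := by
  unfold compat
  rw [Nat.land_comm, bne_comm]

lemma compat_spec : ∀ a ∈ masks, ∀ b ∈ masks,
    (compat true a b = true →
      ∃ x : Fin 4, (a.testBit x ∧ b.testBit x) ∧
        ∀ y : Fin 4, (a.testBit y ∧ b.testBit y) → y = x) ∧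
    (compat false a b = true → ∀ x : Fin 4, ¬ (a.testBit x ∧ b.testBit x)) := by
  decide +kernel

lemma masks_nonempty : ∀ a ∈ masks, ∃ x : Fin 4, a.testBit x := by decide +kernel

lemma masks_inj : ∀ a ∈ masks, ∀ b ∈ masks,
    (∀ x : Fin 4, a.testBit x = b.testBit x) → a = b := by decide +kernel

lemma hasRep_four (G : SimpleGraph (Fin 4)) : HasRep G 4 := by
  classical
  have h := search_four (G.Adj 0 1) (G.Adj 0 2) (G.Adj 0 3) (G.Adj 1 2) (G.Adj 1 3) (G.Adj 2 3)
  simp only [List.any_eq_true, Bool.and_eq_true] at h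
  obtain ⟨a, ha, b, hb, hab, c, hc, hac, hbc, d, hd, had, hbd, hcd⟩ := h
  let m : Fin 4 → ℕ := ![a, b, c, d]
  have hm : ∀ u, m u ∈ masks := by
    intro u
    fin_cases u <;> assumption
  have hlt : ∀ u v : Fin 4, u < v → compat (G.Adj u v) (m u) (m v) = true := by
    intro u v huv
    fin_cases u <;> fin_cases v <;> first | assumption | exact absurd huv (by decide)
  have hcomp : ∀ u v : Fin 4, u ≠ v → compat (G.Adj u v) (m u) (m v) = true := by
    intro u v huv
    rcases lt_or_gt_of_ne huv with h | h
    · exact hlt u v h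
    · have := hlt v u h
      rw [compat_comm] at this
      simpa only [G.adj_comm] using this
  refine ⟨Fin 4, inferInstance, fun u x => (m u).testBit x, by simp, ?_, ?_, ?_⟩
  · intro u v he
    by_contra huv
    have h1 : m u = m v := masks_inj _ (hm u) _ (hm v) fun x =>
      Bool.eq_iff_iff.2 (iff_of_eq (congrFun he x))
    have h2 := hcomp u v huv
    rw [h1] at h2
    simp [compat] at h2
  · exact fun u => masks_nonempty _ (hm u)
  · intro u v huv
    have h2 := hcomp u v huv
    have h3 := compat_spec _ (hm u) _ (hm v)
    refine ⟨fun h => ?_, fun h => ?_⟩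
    · exact h3.1 (by simpa [h] using h2)
    · exact h3.2 (by simpa [h] using h2)

lemma HasRep.of_iso {V W : Type} {G : SimpleGraph V} (e : V ≃ W) {k : ℕ}
    (h : HasRep (G.comap e.symm) k) : HasRep G k := by
  obtain ⟨α, i, S, hcard, hinj, hne, hS⟩ := h
  refine ⟨α, i, fun v => S (e v), hcard, hinj.comp e.injective, fun v => hne _, ?_⟩
  intro u v huv
  simpa using hS (e u) (e v) (e.injective.ne huv)

lemma hasRep_of_card (n : ℕ) (hn : 4 ≤ n) :
    ∀ (V : Type) [Fintype V] (G : SimpleGraph V), Fintype.card V = n → HasRep G (n ^ 2 / 4) := by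
  induction n, hn using Nat.le_induction with
  | base =>
    intro V _ G hV
    exact HasRep.of_iso (Fintype.equivFinOfCardEq hV) (hasRep_four _)
  | succ m hm ih =>
    intro V _ G hV
    classical
    have hk : 0 < (m + 1) / 2 := by omega
    obtain ⟨v, f, hf⟩ := exists_clique_partition G ((m + 1) / 2) hk (by omega) (by omega)
    let G' : SimpleGraph {x : V // x ≠ v} :=
      { Adj := fun a b => G.Adj a.1 b.1 ∧ ¬ (G.Adj v a.1 ∧ G.Adj v b.1 ∧ f a.1 = f b.1)
        symm := ⟨fun a b h => ⟨h.1.symm, fun h' => h.2 ⟨h'.2.1, h'.1, h'.2.2.symm⟩⟩⟩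
        loopless := ⟨fun a h => G.loopless.irrefl _ h.1⟩ }
    have h' := HasRep.extend hk f hf (G' := G') (fun _ _ => Iff.rfl)
      (ih _ G' (by simp [Fintype.card_subtype_compl, hV]))
    have hnum : (m + 1) ^ 2 / 4 = m ^ 2 / 4 + (m + 1) / 2 := by
      rcases Nat.even_or_odd' m with ⟨c, rfl | rfl⟩
      · have h1 : (2 * c + 1) ^ 2 = 4 * (c ^ 2 + c) + 1 := by ring
        have h2 : (2 * c) ^ 2 = 4 * c ^ 2 := by ring
        omega
      · have h1 : (2 * c + 1) ^ 2 = 4 * (c ^ 2 + c) + 1 := by ring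
        have h2 : (2 * c + 1 + 1) ^ 2 = 4 * (c ^ 2 + 2 * c + 1) := by ring
        omega
    rwa [hnum]

/-- For `n ≥ 4`, every simple graph on `n` vertices has a distinct-set
representation on a ground set of at most `⌊n²/4⌋` elements. -/
theorem stmt_3 (n : ℕ) (hn : 4 ≤ n) (G : SimpleGraph (Fin n)) :
    ∃ (X : Finset ℕ) (S : Fin n → Finset ℕ),
      X.card ≤ n ^ 2 / 4 ∧ Function.Injective S ∧
      (∀ v, (S v).Nonempty ∧ S v ⊆ X) ∧
      (∀ u v : Fin n, u ≠ v →
        (G.Adj u v → (S u ∩ S v).card = 1) ∧ (¬ G.Adj u v → (S u ∩ S v).card = 0)) := by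
  classical
  obtain ⟨α, _, S, hcard, hinj, hne, hS⟩ := hasRep_of_card n hn (Fin n) G (by simp)
  let e : α ↪ ℕ := (Fintype.equivFin α).toEmbedding.trans Fin.valEmbedding
  let F : Fin n → Finset α := fun v => Finset.univ.filter (S v)
  have hF : ∀ u v, F u ∩ F v = Finset.univ.filter (fun x => S u x ∧ S v x) := by
    intro u v
    ext x
    simp [F]
  refine ⟨Finset.univ.map e, fun v => (F v).map e, by simpa using hcard, ?_, ?_, ?_⟩
  · intro u v h
    have h1 : F u = F v := Finset.map_injective e h
    apply hinj
    funext x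
    simpa [F] using Finset.ext_iff.1 h1 x
  · intro v
    obtain ⟨x, hx⟩ := hne v
    exact ⟨⟨e x, by simpa [F] using hx⟩, Finset.map_subset_map.2 (Finset.subset_univ _)⟩
  · intro u v huv
    simp only [← Finset.map_inter, Finset.card_map, hF]
    refine ⟨fun h => ?_, fun h => ?_⟩
    · obtain ⟨x, hx, hx'⟩ := (hS u v huv).1 h
      rw [Finset.card_eq_one]
      refine ⟨x, Finset.ext fun y => ?_⟩
      simp only [Finset.mem_filter, Finset.mem_univ, true_and, Finset.mem_singleton]
      exact ⟨hx' y, fun h => h ▸ hx⟩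
    · rw [Finset.card_eq_zero, Finset.filter_eq_empty_iff]
      exact fun x _ => (hS u v huv).2 h x
end

section
/- Every greedy clique decomposition of a simple graph G on n vertices consists of at most ⌊n²/4⌋ cliques; that is, if Q₁, …, Q_m is an ordered list of cliques of G such that each Q_i contains at least one edge, each Q_i is a maximal clique of the graph obtained from G by deleting all edges lying in Q₁, …, Q_{i−1}, and every edge of G lies in exactly one Q_i, then m ≤ ⌊n²/4⌋. -/
/-!
The proof is an induction that removes two vertices at a time, as in Mantel's theorem.

Maximality of the cliques has the following consequence (`IsGreedyCliqueDecomposition.witness`):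
if `v ∉ Q i`, then some `x ∈ Q i` is such that no later clique contains both `x` and `v`.
Together with edge-disjointness this property passes to subfamilies of the cliques.

Let `Q k` be the last clique of a subfamily living on a vertex set `S`, and let `u ≠ v` lie in
`Q k`. Any other clique `Q i` meeting `{u, v}` contains exactly one of the two vertices; let `x i`
be the witness in `Q i` for the other one. Since `k` is later than `i` and contains both `u` and
`v`, the witness is not in `{u, v}`. The map `i ↦ x i` is injective: if `x i = x j` with `i < j`,
then either `Q i` and `Q j` share an edge at `u` or at `v`, or `Q j` joins `x i` to the vertex for
which it is a witness. So at most `|S| - 1` cliques of the subfamily meet `{u, v}`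
(`card_touching_le`). The others live on `S \ {u, v}`, and
`(|S| - 2)² / 4 + (|S| - 1) = |S|² / 4`.
-/

/-- The graph obtained from `G` by deleting all edges lying in the cliques
`Q j` for `j < i`. -/
def greedyResidual {n m : ℕ} (G : SimpleGraph (Fin n)) (Q : Fin m → Finset (Fin n))
    (i : Fin m) : SimpleGraph (Fin n) :=
  G.deleteEdges {e : Sym2 (Fin n) | ∃ j : Fin m, j < i ∧ ∀ x ∈ e, x ∈ Q j}

/-- `Q₁, …, Q_m` is a greedy clique decomposition of `G`: each `Q i` contains at
least one edge, each `Q i` is a maximal clique of the graph obtained from `G` by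
deleting all edges lying in the earlier cliques, and every edge of `G` lies in
exactly one `Q i`. -/
def IsGreedyCliqueDecomposition {n m : ℕ} (G : SimpleGraph (Fin n))
    (Q : Fin m → Finset (Fin n)) : Prop :=
  (∀ i, 2 ≤ (Q i).card) ∧
  (∀ i, (greedyResidual G Q i).IsClique ((Q i : Finset (Fin n)) : Set (Fin n))) ∧
  (∀ i, ∀ t : Finset (Fin n), Q i ⊆ t →
    (greedyResidual G Q i).IsClique (t : Set (Fin n)) → t = Q i) ∧
  (∀ u v : Fin n, G.Adj u v → ∃! i, u ∈ Q i ∧ v ∈ Q i)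

/-- Two distinct vertices lie together in at most one clique. -/
theorem IsGreedyCliqueDecomposition.unique {n m : ℕ} {G : SimpleGraph (Fin n)}
    {Q : Fin m → Finset (Fin n)} (hQ : IsGreedyCliqueDecomposition G Q)
    {i j : Fin m} {u v : Fin n} (huv : u ≠ v) (hui : u ∈ Q i) (hvi : v ∈ Q i)
    (huj : u ∈ Q j) (hvj : v ∈ Q j) : i = j := by
  obtain ⟨-, hc, -, he⟩ := hQ
  have hadj : G.Adj u v := by
    have h := hc i (Finset.mem_coe.2 hui) (Finset.mem_coe.2 hvi) huv
    exact (SimpleGraph.deleteEdges_adj.1 h).1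
  exact (he u v hadj).unique ⟨hui, hvi⟩ ⟨huj, hvj⟩

/-- The form in which maximality is used: otherwise `insert v (Q i)` would be a clique of the
residual graph. -/
theorem IsGreedyCliqueDecomposition.witness {n m : ℕ} {G : SimpleGraph (Fin n)}
    {Q : Fin m → Finset (Fin n)} (hQ : IsGreedyCliqueDecomposition G Q)
    (i : Fin m) (v : Fin n) (hv : v ∉ Q i) :
    ∃ x ∈ Q i, ∀ j, i < j → x ∈ Q j → v ∉ Q j := by
  by_contra! hcon
  have hadj : ∀ x ∈ Q i, (greedyResidual G Q i).Adj v x := by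
    intro x hx
    have hne : v ≠ x := fun h => hv (h ▸ hx)
    obtain ⟨j, hij, hxj, hvj⟩ := hcon x hx
    refine SimpleGraph.deleteEdges_adj.2 ⟨?_, ?_⟩
    · have h := hQ.2.1 j (Finset.mem_coe.2 hvj) (Finset.mem_coe.2 hxj) hne
      exact (SimpleGraph.deleteEdges_adj.1 h).1
    · rintro ⟨l, hl, hmem⟩
      have := hQ.unique hne hvj hxj (hmem v (by simp)) (hmem x (by simp))
      omega
  have hins : insert v (Q i) = Q i := by
    refine hQ.2.2.1 i _ (Finset.subset_insert _ _) ?_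
    rw [Finset.coe_insert, SimpleGraph.isClique_insert]
    exact ⟨hQ.2.1 i, fun x hx _ => hadj x (Finset.mem_coe.1 hx)⟩
  exact hv (hins ▸ Finset.mem_insert_self v (Q i))

/-- If `u` and `v` lie in the last clique `Q k` of a subfamily on `S`, at most `|S| - 2` of the
other cliques meet `{u, v}`, because each of them owns a vertex of `S \ {u, v}`. -/
theorem card_touching_le {n m : ℕ} {G : SimpleGraph (Fin n)}
    {Q : Fin m → Finset (Fin n)} (hQ : IsGreedyCliqueDecomposition G Q)
    (S : Finset (Fin n)) (I : Finset (Fin m)) (hS : ∀ i ∈ I, Q i ⊆ S)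
    (k : Fin m) (u v : Fin n) (huv : u ≠ v) (hu : u ∈ Q k) (hv : v ∈ Q k)
    (hI : ∀ i ∈ I, i < k ∧ (u ∈ Q i ∨ v ∈ Q i)) :
    I.card ≤ ((S.erase u).erase v).card := by
  have hex : ∀ i ∈ I, ∃ x ∈ Q i, x ≠ u ∧ x ≠ v ∧
      ((u ∈ Q i ∧ ∀ j, i < j → x ∈ Q j → v ∉ Q j) ∨
        (v ∈ Q i ∧ ∀ j, i < j → x ∈ Q j → u ∉ Q j)) := by
    intro i hi
    obtain ⟨hik, h | h⟩ := hI i hi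
    · have hvi : v ∉ Q i := fun h' => hik.ne (hQ.unique huv h h' hu hv)
      obtain ⟨x, hx, hw⟩ := hQ.witness i v hvi
      exact ⟨x, hx, fun e => hw k hik (e ▸ hu) hv, fun e => hvi (e ▸ hx), .inl ⟨h, hw⟩⟩
    · have hui : u ∉ Q i := fun h' => hik.ne (hQ.unique huv h' h hu hv)
      obtain ⟨x, hx, hw⟩ := hQ.witness i u hui
      exact ⟨x, hx, fun e => hui (e ▸ hx), fun e => hw k hik (e ▸ hv) hu, .inr ⟨h, hw⟩⟩
  have : Nonempty (Fin n) := ⟨u⟩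
  choose! x hxQ hxu hxv hw using hex
  have hlt : ∀ i ∈ I, ∀ j ∈ I, x i = x j → ¬ i < j := by
    intro i hi j hj hij hlt
    have hxj : x i ∈ Q j := hij ▸ hxQ j hj
    rcases hw i hi with ⟨hui, h⟩ | ⟨hvi, h⟩
    · have huj := (hI j hj).2.resolve_right (h j hlt hxj)
      exact hlt.ne (hQ.unique (hxu i hi) (hxQ i hi) hui hxj huj)
    · have hvj := (hI j hj).2.resolve_left (h j hlt hxj)
      exact hlt.ne (hQ.unique (hxv i hi) (hxQ i hi) hvi hxj hvj)
  refine Finset.card_le_card_of_injOn x ?_ ?_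
  · intro i hi
    have hi' := Finset.mem_coe.1 hi
    simp [hxu i hi', hxv i hi', hS i hi' (hxQ i hi')]
  · intro i hi j hj hij
    exact le_antisymm (not_lt.1 (hlt j hj i hi hij.symm)) (not_lt.1 (hlt i hi j hj hij))

/-- The bound for subfamilies on a vertex set `S`, with the floor cleared. -/
theorem four_mul_card_le {n m : ℕ} {G : SimpleGraph (Fin n)}
    {Q : Fin m → Finset (Fin n)} (hQ : IsGreedyCliqueDecomposition G Q) (s : ℕ) :
    ∀ (S : Finset (Fin n)) (I : Finset (Fin m)), S.card = s → (∀ i ∈ I, Q i ⊆ S) →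
      4 * I.card ≤ s ^ 2 := by
  induction s using Nat.strong_induction_on with
  | _ s ih =>
  intro S I hs hS
  rcases I.eq_empty_or_nonempty with rfl | hne
  · simp
  set k := I.max' hne with hk
  have hkI : k ∈ I := I.max'_mem hne
  obtain ⟨u, hu, v, hv, huv⟩ := Finset.one_lt_card.1 (hQ.1 k)
  have huS := hS k hkI hu
  have hvS := hS k hkI hv
  have hcard : ((S.erase u).erase v).card + 2 = s := by
    have h1 := Finset.card_erase_add_one huS
    have h2 := Finset.card_erase_add_one (Finset.mem_erase.2 ⟨huv.symm, hvS⟩)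
    omega
  have htouch := card_touching_le hQ S ((I.erase k).filter fun i => u ∈ Q i ∨ v ∈ Q i)
    (fun i hi => hS i (Finset.mem_of_mem_erase (Finset.mem_filter.1 hi).1)) k u v huv hu hv
    (fun i hi => by
      obtain ⟨hi, h⟩ := Finset.mem_filter.1 hi
      exact ⟨I.lt_max'_of_mem_erase_max' hne hi, h⟩)
  have hrest := ih _ (by omega) ((S.erase u).erase v)
    ((I.erase k).filter fun i => ¬ (u ∈ Q i ∨ v ∈ Q i)) rfl (by
      intro i hi y hy
      obtain ⟨hi, h⟩ := Finset.mem_filter.1 hi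
      push Not at h
      refine Finset.mem_erase.2 ⟨fun e => h.2 (e ▸ hy), Finset.mem_erase.2
        ⟨fun e => h.1 (e ▸ hy), hS i (Finset.mem_of_mem_erase hi) hy⟩⟩)
  have hsplit := Finset.card_filter_add_card_filter_not (s := I.erase k)
    (fun i => u ∈ Q i ∨ v ∈ Q i)
  have hI := Finset.card_erase_add_one hkI
  rw [← hcard]
  nlinarith

/-- Every greedy clique decomposition of an `n`-vertex graph has at most
`⌊n²/4⌋` cliques. -/
theorem stmt_4 {n m : ℕ} (G : SimpleGraph (Fin n)) (Q : Fin m → Finset (Fin n))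
    (hQ : IsGreedyCliqueDecomposition G Q) : m ≤ n ^ 2 / 4 := by
  have h := four_mul_card_le hQ n Finset.univ Finset.univ (by simp)
    (fun i _ => Finset.subset_univ _)
  rw [Finset.card_univ, Fintype.card_fin] at h
  omega
end

section
/- Let G be a simple graph on n ≥ 4 vertices and let Q₁, …, Q_m be a greedy clique decomposition of G. For each vertex v let S(v) = {i : v ∈ Q_i} be its clique-incidence set. Then m + (n − D) ≤ ⌊n²/4⌋, where D is the number of distinct sets among {S(v) : v a vertex of G}. (Equivalently, the representation obtained from the decomposition by attaching one new monopolized element to each vertex in excess of one in every class of vertices with identical incidence sets uses at most ⌊n²/4⌋ elements.) -/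
/-- The combinatorial content of a greedy clique decomposition, with the graph forgotten: the sets
`P i`, `i ∈ I`, are subsets of `W` of size at least two, two of them share at most one point, and
for every `w ∈ W \ P i` some `x ∈ P i` is not joined to `w` by any `P j` with `j ≥ i`. -/
structure GreedyFamily {ι V : Type*} [LinearOrder ι] (I : Finset ι) (W : Finset V)
    (P : ι → Finset V) : Prop where
  sub : ∀ i ∈ I, P i ⊆ W
  two : ∀ i ∈ I, 2 ≤ (P i).card
  lin : ∀ i ∈ I, ∀ j ∈ I, i ≠ j → ∀ u v, u ∈ P i → v ∈ P i → u ∈ P j → v ∈ P j → u = v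
  max : ∀ i ∈ I, ∀ w ∈ W, w ∉ P i → ∃ x ∈ P i, ∀ j ∈ I, i ≤ j → ¬ (x ∈ P j ∧ w ∈ P j)

namespace GreedyFamily

variable {ι V : Type*} [LinearOrder ι] {I : Finset ι} {W : Finset V}
  {P : ι → Finset V}

/-- A set `P j` meeting `P i` has a point `w` outside `P i` which, if `j < i`, fails to be joined
to some `x ∈ P i` from time `j` on. -/
lemma exists_pick (h : GreedyFamily I W P) {i j : ι} (hi : i ∈ I) (hj : j ∈ I) (hji : j ≠ i)
    {u : V} (hui : u ∈ P i) (huj : u ∈ P j) :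
    ∃ w ∈ P j, w ∉ P i ∧
      (j < i → ∃ x ∈ P i, ∀ l ∈ I, j ≤ l → ¬ (x ∈ P l ∧ w ∈ P l)) := by
  by_cases hlt : j < i
  · obtain ⟨x, hx, hxu⟩ := Finset.exists_mem_ne (h.two i hi) u
    have hxj : x ∉ P j := fun hxj => hxu (h.lin i hi j hj hji.symm x u hx hui hxj huj)
    obtain ⟨w, hw, hwx⟩ := h.max j hj x (h.sub i hi hx) hxj
    exact ⟨w, hw, fun hwi => hwx i hi hlt.le ⟨hwi, hx⟩,
      fun _ => ⟨x, hx, fun l hl hjl hc => hwx l hl hjl hc.symm⟩⟩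
  · obtain ⟨w, hw, hwu⟩ := Finset.exists_mem_ne (h.two j hj) u
    exact ⟨w, hw, fun hwi => hwu (h.lin i hi j hj hji.symm w u hwi hui hw huj),
      fun hc => absurd hc hlt⟩

/-- At most `(k - 1) (N - k)` of the other sets meet a given set of size `k`, where `N = |W|`. -/
lemma card_touching_le [DecidableEq V] (h : GreedyFamily I W P) {i : ι} (hi : i ∈ I) :
    (I.filter fun j => j ≠ i ∧ (P i ∩ P j).Nonempty).card ≤
      ((P i).card - 1) * (W.card - (P i).card) := by
  classical
  set T := I.filter fun j => j ≠ i ∧ (P i ∩ P j).Nonempty with hT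
  have hex : ∀ j, ∃ u w, j ∈ T → u ∈ P i ∧ u ∈ P j ∧ w ∈ P j ∧ w ∉ P i ∧
      (j < i → ∃ x ∈ P i, ∀ l ∈ I, j ≤ l → ¬ (x ∈ P l ∧ w ∈ P l)) := by
    intro j
    by_cases hj : j ∈ T
    · obtain ⟨hjI, hji, u, hu⟩ := by simpa only [hT, Finset.mem_filter] using hj
      rw [Finset.mem_inter] at hu
      obtain ⟨w, hw⟩ := h.exists_pick hi hjI hji hu.1 hu.2
      exact ⟨u, w, fun _ => ⟨hu.1, hu.2, hw⟩⟩
    · have : (P i).Nonempty := Finset.card_pos.mp (by have := h.two i hi; omega)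
      obtain ⟨u, -⟩ := this
      exact ⟨u, u, fun hc => absurd hc hj⟩
  choose u pick hup using hex
  have hTI : ∀ j ∈ T, j ∈ I := fun j hj => (Finset.mem_filter.mp hj).1
  have hmaps : ∀ j ∈ T, pick j ∈ W \ P i := fun j hj =>
    Finset.mem_sdiff.mpr ⟨h.sub j (hTI j hj) (hup j hj).2.2.1, (hup j hj).2.2.2.1⟩
  have hfib : ∀ w ∈ W \ P i, (T.filter fun j => pick j = w).card ≤ (P i).card - 1 := by
    intro w hw
    obtain ⟨hwW, hwi⟩ := Finset.mem_sdiff.mp hw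
    set F := T.filter fun j => pick j = w with hF
    have hFT : ∀ j ∈ F, j ∈ T ∧ pick j = w := fun j hj => Finset.mem_filter.mp hj
    have hFw : ∀ j ∈ F, w ∈ P j := fun j hj =>
      (hFT j hj).2 ▸ (hup j (hFT j hj).1).2.2.1
    -- Such an `x` comes from the earliest set choosing `w` if that set precedes `P i`, and from
    -- the maximality of `P i` otherwise.
    obtain ⟨x, hx, hxF⟩ : ∃ x ∈ P i, ∀ j ∈ F, x ∉ P j := by
      by_cases hlt : ∃ j ∈ F, j < i
      · obtain ⟨j₁, hj₁, hj₁i⟩ := hlt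
        have hne : F.Nonempty := ⟨j₁, hj₁⟩
        have hmem := F.min'_mem hne
        obtain ⟨x, hx, hxl⟩ := (hup _ (hFT _ hmem).1).2.2.2.2
          ((F.min'_le j₁ hj₁).trans_lt hj₁i)
        rw [(hFT _ hmem).2] at hxl
        exact ⟨x, hx, fun j hj hxj =>
          hxl j (hTI j (hFT j hj).1) (F.min'_le j hj) ⟨hxj, hFw j hj⟩⟩
      · push Not at hlt
        obtain ⟨x, hx, hxl⟩ := h.max i hi w hwW hwi
        exact ⟨x, hx, fun j hj hxj =>
          hxl j (hTI j (hFT j hj).1) (hlt j hj) ⟨hxj, hFw j hj⟩⟩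
    rw [← Finset.card_erase_of_mem hx]
    refine Finset.card_le_card_of_injOn u (fun j hj => ?_) (fun j hj l hl hjl => ?_)
    · have hj' := hup j (hFT j hj).1
      exact Finset.mem_coe.mpr (Finset.mem_erase.mpr
        ⟨fun hc => hxF j hj (hc ▸ hj'.2.1), hj'.1⟩)
    · have hj' := hup j (hFT j hj).1
      have hl' := hup l (hFT l hl).1
      by_contra hne
      have huw : u j = w := h.lin j (hTI j (hFT j hj).1) l (hTI l (hFT l hl).1) hne _ _
        hj'.2.1 (hFw j hj) (hjl ▸ hl'.2.1) (hFw l hl)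
      exact hwi (huw ▸ hj'.1)
  calc T.card ≤ ((P i).card - 1) * (W \ P i).card :=
        Finset.card_le_mul_card_image_of_maps_to hmaps _ hfib
    _ = _ := by rw [Finset.card_sdiff_of_subset (h.sub i hi)]

/-- The key estimate `∑_{u ∈ P i} r(u) ≤ N (k - 1)`, where `r(u)` is the number of sets of the
family containing `u`, `k = |P i|` and `N = |W|`. -/
lemma sum_degree_le [DecidableEq V] (h : GreedyFamily I W P) {i : ι} (hi : i ∈ I) :
    (∑ u ∈ P i, ((I.filter fun j => u ∈ P j).card : ℤ)) ≤ W.card * ((P i).card - 1) := by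
  have h1 : ∑ u ∈ P i, (I.filter fun j => u ∈ P j).card = ∑ j ∈ I, (P i ∩ P j).card := by
    simp only [Finset.card_filter]
    rw [Finset.sum_comm]
    refine Finset.sum_congr rfl fun j _ => ?_
    rw [← Finset.card_filter, Finset.filter_mem_eq_inter]
  have h2 : ∑ j ∈ I, (P i ∩ P j).card ≤
      (P i).card + (I.filter fun j => j ≠ i ∧ (P i ∩ P j).Nonempty).card := by
    rw [← Finset.add_sum_erase I _ hi, Finset.inter_self]
    refine Nat.add_le_add_left ?_ _
    have : (I.filter fun j => j ≠ i ∧ (P i ∩ P j).Nonempty) =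
        (I.erase i).filter fun j => (P i ∩ P j).Nonempty := by
      ext j; simp only [Finset.mem_filter, Finset.mem_erase]; tauto
    rw [this, Finset.card_filter]
    refine Finset.sum_le_sum fun j hj => ?_
    obtain ⟨hji, hj⟩ := Finset.mem_erase.mp hj
    split_ifs with hne
    · refine Finset.card_le_one.mpr fun a ha b hb => ?_
      rw [Finset.mem_inter] at ha hb
      exact h.lin i hi j hj hji.symm a b ha.1 hb.1 ha.2 hb.2
    · rw [Finset.not_nonempty_iff_eq_empty.mp hne, Finset.card_empty]
  have h3 := h.card_touching_le hi
  have hk := h.two i hi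
  have hkW := Finset.card_le_card (h.sub i hi)
  have h4 := (h1.trans_le h2).trans (Nat.add_le_add_left h3 _)
  zify [show 1 ≤ (P i).card by omega, hkW] at h4
  have hk' : (2 : ℤ) ≤ (P i).card := by exact_mod_cast hk
  nlinarith

theorem four_mul_card_le_sq [DecidableEq V] (h : GreedyFamily I W P) : 4 * I.card ≤ W.card ^ 2 := by
  set r : V → ℤ := fun u => ((I.filter fun j => u ∈ P j).card : ℤ) with hr
  set K : ℤ := ∑ i ∈ I, ((P i).card : ℤ) with hK
  -- Double counting of incidences, weighted by `f`.
  have hdc : ∀ f : V → ℤ, ∑ i ∈ I, ∑ u ∈ P i, f u = ∑ u ∈ W, r u * f u := by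
    intro f
    have : ∀ i ∈ I, ∑ u ∈ P i, f u = ∑ u ∈ W, if u ∈ P i then f u else 0 := by
      intro i hi
      rw [← Finset.sum_filter, Finset.filter_mem_eq_inter,
        Finset.inter_eq_right.mpr (h.sub i hi)]
    rw [Finset.sum_congr rfl this, Finset.sum_comm]
    refine Finset.sum_congr rfl fun u _ => ?_
    rw [← Finset.sum_filter, Finset.sum_const, nsmul_eq_mul]
  have hK1 : ∑ u ∈ W, r u = K := by
    have := hdc fun _ => 1
    simp only [Finset.sum_const, nsmul_eq_mul, mul_one] at this
    exact this.symm
  have hsq : ∑ u ∈ W, r u ^ 2 ≤ W.card * (K - I.card) := by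
    calc ∑ u ∈ W, r u ^ 2 = ∑ i ∈ I, ∑ u ∈ P i, r u := by simp only [hdc r, sq]
      _ ≤ ∑ i ∈ I, (W.card : ℤ) * ((P i).card - 1) :=
        Finset.sum_le_sum fun i hi => h.sum_degree_le hi
      _ = _ := by
        rw [← Finset.mul_sum, Finset.sum_sub_distrib]; simp [hK]
  have hcs : (∑ u ∈ W, r u) ^ 2 ≤ W.card * ∑ u ∈ W, r u ^ 2 := sq_sum_le_card_mul_sum_sq
  rw [hK1] at hcs
  rcases I.eq_empty_or_nonempty with rfl | ⟨i, hi⟩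
  · simp
  have hN : 0 < W.card := by
    have := h.two i hi
    have := Finset.card_le_card (h.sub i hi)
    omega
  have hN' : (0 : ℤ) < W.card := by exact_mod_cast hN
  have hfin : K ^ 2 ≤ (W.card : ℤ) ^ 2 * (K - I.card) := by
    calc K ^ 2 ≤ W.card * ∑ u ∈ W, r u ^ 2 := hcs
      _ ≤ W.card * (W.card * (K - I.card)) := mul_le_mul_of_nonneg_left hsq hN'.le
      _ = _ := by ring
  have : (4 * I.card : ℤ) ≤ (W.card : ℤ) ^ 2 := by
    refine le_of_mul_le_mul_left ?_ (pow_pos hN' 2)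
    nlinarith [sq_nonneg (2 * K - (W.card : ℤ) ^ 2)]
  exact_mod_cast this

end GreedyFamily

lemma IsGreedyCliqueDecomposition.greedyFamily {n m : ℕ} {G : SimpleGraph (Fin n)}
    {Q : Fin m → Finset (Fin n)} (hQ : IsGreedyCliqueDecomposition G Q) :
    GreedyFamily Finset.univ Finset.univ Q := by
  obtain ⟨h2, hcl, hmax, huniq⟩ := hQ
  have hadj : ∀ i u v, u ∈ Q i → v ∈ Q i → u ≠ v →
      G.Adj u v ∧ ¬ ∃ j, j < i ∧ u ∈ Q j ∧ v ∈ Q j := by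
    intro i u v hu hv huv
    have := hcl i (Finset.mem_coe.mpr hu) (Finset.mem_coe.mpr hv) huv
    simpa [greedyResidual, SimpleGraph.deleteEdges_adj] using this
  refine ⟨fun _ _ => Finset.subset_univ _, fun i _ => h2 i, ?_, ?_⟩
  · intro i _ j _ hij u v hui hvi huj hvj
    by_contra huv
    exact hij ((huniq u v (hadj i u v hui hvi huv).1).unique ⟨hui, hvi⟩ ⟨huj, hvj⟩)
  · intro i _ w _ hw
    by_contra! hcon
    refine hw ?_
    rw [← hmax i (insert w (Q i)) (Finset.subset_insert _ _) ?_]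
    · exact Finset.mem_insert_self _ _
    rw [Finset.coe_insert, SimpleGraph.isClique_insert]
    refine ⟨hcl i, fun x hx hwx => ?_⟩
    obtain ⟨j, -, hij, hxj, hwj⟩ := hcon x hx
    obtain ⟨hG, hno⟩ := hadj j w x hwj hxj hwx
    simp only [greedyResidual, SimpleGraph.deleteEdges_adj, Set.mem_ofPred_eq, Sym2.mem_iff,
      forall_eq_or_imp, forall_eq]
    exact ⟨hG, fun ⟨l, hl, hc⟩ => hno ⟨l, hl.trans_le hij, hc⟩⟩

/-- For a greedy clique decomposition `Q₁, …, Q_m` of a graph on `n ≥ 4`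
vertices, with `D` the number of distinct clique-incidence sets
`S(v) = {i : v ∈ Q i}`, we have `m + (n − D) ≤ ⌊n²/4⌋`. -/
theorem stmt_5 {n m : ℕ} (hn : 4 ≤ n) (G : SimpleGraph (Fin n))
    (Q : Fin m → Finset (Fin n)) (hQ : IsGreedyCliqueDecomposition G Q) :
    m + (n - (Finset.univ.image fun v : Fin n =>
      Finset.univ.filter fun i : Fin m => v ∈ Q i).card) ≤ n ^ 2 / 4 := by
  have hF := hQ.greedyFamily
  set S : Fin n → Finset (Fin m) := fun v => Finset.univ.filter fun i : Fin m => v ∈ Q i with hS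
  have hmemS : ∀ v i, i ∈ S v ↔ v ∈ Q i := fun v i => by simp [hS]
  obtain ⟨R, -, hRinj, hRimg⟩ := Finset.exists_subset_injOn_image_eq_of_surjOn
    (f := S) Set.univ (Finset.univ.image S) (by simp [Set.SurjOn])
  have hRcard : (Finset.univ.image S).card = R.card := by
    rw [← hRimg, Finset.card_image_of_injOn hRinj]
  have hrep : ∀ v, ∃ v' ∈ R, S v' = S v := fun v => by
    have : S v ∈ R.image S := hRimg ▸ Finset.mem_image_of_mem S (Finset.mem_univ v)
    simpa using this
  set I : Finset (Fin m) := Finset.univ.filter fun i => 2 ≤ (Q i ∩ R).card with hI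
  set W : Finset (Fin n) := R.filter fun v => ∃ i ∈ I, v ∈ Q i with hW
  have hWfam : GreedyFamily I W fun i => Q i ∩ R := by
    refine ⟨?_, ?_, ?_, ?_⟩
    · intro i hi v hv
      rw [Finset.mem_inter] at hv
      exact Finset.mem_filter.mpr ⟨hv.2, i, hi, hv.1⟩
    · exact fun i hi => (Finset.mem_filter.mp hi).2
    · intro i _ j _ hij u v hui hvi huj hvj
      simp only [Finset.mem_inter] at hui hvi huj hvj
      exact hF.lin i (Finset.mem_univ _) j (Finset.mem_univ _) hij u v hui.1 hvi.1 huj.1 hvj.1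
    · intro i _ w hw hwi
      have hwR : w ∈ R := (Finset.mem_filter.mp hw).1
      have hwQ : w ∉ Q i := fun hc => hwi (Finset.mem_inter.mpr ⟨hc, hwR⟩)
      obtain ⟨x, hx, hxj⟩ := hF.max i (Finset.mem_univ _) w (Finset.mem_univ _) hwQ
      -- The representative of `x` lies in the same cliques as `x`.
      obtain ⟨x', hx'R, hx'⟩ := hrep x
      have hiff : ∀ j, x' ∈ Q j ↔ x ∈ Q j := fun j => by rw [← hmemS, ← hmemS, hx']
      refine ⟨x', Finset.mem_inter.mpr ⟨(hiff i).mpr hx, hx'R⟩, fun j _ hij hc => ?_⟩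
      simp only [Finset.mem_inter] at hc
      exact hxj j (Finset.mem_univ _) hij ⟨(hiff j).mp hc.1.1, hc.2.1⟩
  have hmain := hWfam.four_mul_card_le_sq
  -- A clique outside `I` has all its vertices in one class; two of them are distinct, so they
  -- lie in no second common clique.
  have hout : ∀ i, i ∉ I → ∃ x ∈ R, S x = {i} := by
    intro i hi
    have hle : (Q i ∩ R).card ≤ 1 := by
      by_contra hc
      exact hi (Finset.mem_filter.mpr ⟨Finset.mem_univ _, by omega⟩)
    obtain ⟨u, hu, v, hv, huv⟩ := Finset.one_lt_card.mp (hF.two i (Finset.mem_univ _))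
    obtain ⟨u', hu'R, hu'⟩ := hrep u
    obtain ⟨v', hv'R, hv'⟩ := hrep v
    have hu'i : u' ∈ Q i := by rw [← hmemS, hu', hmemS]; exact hu
    have hv'i : v' ∈ Q i := by rw [← hmemS, hv', hmemS]; exact hv
    have heq : u' = v' := Finset.card_le_one.mp hle _ (Finset.mem_inter.mpr ⟨hu'i, hu'R⟩) _
      (Finset.mem_inter.mpr ⟨hv'i, hv'R⟩)
    have hSuv : S u = S v := by rw [← hu', heq, hv']
    refine ⟨u', hu'R, Finset.eq_singleton_iff_unique_mem.mpr ⟨(hmemS _ _).mpr hu'i, ?_⟩⟩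
    intro j hj
    rw [hu'] at hj
    have huj := (hmemS _ _).mp hj
    have hvj := (hmemS _ _).mp (hSuv ▸ hj)
    by_contra hji
    exact huv (hF.lin j (Finset.mem_univ _) i (Finset.mem_univ _) hji u v huj hvj hu hv)
  have hcount : Iᶜ.card ≤ (R \ W).card := by
    have hsub : Iᶜ.image (fun i => ({i} : Finset (Fin m))) ⊆ (R \ W).image S := by
      intro s hs
      obtain ⟨i, hi, rfl⟩ := Finset.mem_image.mp hs
      have hiI := Finset.mem_compl.mp hi
      obtain ⟨x, hxR, hx⟩ := hout i hiI
      refine Finset.mem_image.mpr ⟨x, Finset.mem_sdiff.mpr ⟨hxR, fun hxW => ?_⟩, hx⟩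
      obtain ⟨-, j, hj, hxj⟩ := Finset.mem_filter.mp hxW
      have : j ∈ S x := (hmemS _ _).mpr hxj
      rw [hx, Finset.mem_singleton] at this
      exact hiI (this ▸ hj)
    have := Finset.card_le_card hsub
    rw [Finset.card_image_of_injective _ Finset.singleton_injective] at this
    exact this.trans Finset.card_image_le
  have hWR : W ⊆ R := Finset.filter_subset _ _
  rw [Finset.card_compl, Fintype.card_fin, Finset.card_sdiff_of_subset hWR] at hcount
  have hWRc := Finset.card_le_card hWR
  have hRn : R.card ≤ n := by simpa using Finset.card_le_univ R
  rw [hRcard, Nat.le_div_iff_mul_le (by norm_num)]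
  have hle : m + (n - R.card) ≤ I.card + (n - W.card) := by omega
  have hWn : W.card ≤ n := hWRc.trans hRn
  obtain ⟨s, hs⟩ := Nat.exists_eq_add_of_le hWn
  have hns : n - W.card = s := by omega
  rw [hns] at hle
  -- Here `n = |W| + s`, and `4 s ≤ s (2 |W| + s)` since `4 ≤ n`.
  have : 4 * s ≤ s * (2 * W.card + s) := by
    rw [mul_comm 4 s]
    exact Nat.mul_le_mul_left s (by omega)
  have hn2 : n ^ 2 = W.card ^ 2 + s * (2 * W.card + s) := by
    conv_lhs => rw [hs]
    ring
  omega
end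

section
/- Let Q be a collection of cliques of a simple graph G such that every edge of G lies in exactly one member of Q, and for each vertex w let S(w) = {Q ∈ Q : w ∈ Q}. If u and v are distinct adjacent vertices with S(u) = S(v), then the unique member Q_{uv} of Q containing both u and v is a maximal clique of G, and moreover Q_{uv} is the only member of Q containing u and the only member of Q containing v. -/
/-!
Since `u` and `v` lie in the same members of `Q`, any member containing one of them contains the
edge `uv`, so by uniqueness it is `C`. Every edge at `u` is therefore covered by `C`, i.e. `C`
contains all neighbours of `u`, and no clique through `u` can properly extend it.
-/

/-- If `Q` is a clique partition of the edge set of `G` and `u, v` are distinct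
adjacent vertices with the same clique-incidence set, then the unique member of
`Q` containing both `u` and `v` is a maximal clique of `G` and it is the only
member of `Q` containing `u`, as well as the only member containing `v`. -/
theorem stmt_6 {V : Type*} [Fintype V] [DecidableEq V] (G : SimpleGraph V)
    (Q : Finset (Finset V))
    (hclique : ∀ C ∈ Q, G.IsClique (C : Set V))
    (hpart : ∀ u v : V, G.Adj u v → ∃! C, C ∈ Q ∧ u ∈ C ∧ v ∈ C)
    (u v : V) (huv : G.Adj u v)
    (hS : Q.filter (fun C => u ∈ C) = Q.filter (fun C => v ∈ C)) :
    ∀ C ∈ Q, u ∈ C → v ∈ C →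
      ((∀ t : Finset V, C ⊆ t → G.IsClique (t : Set V) → t = C) ∧
       (∀ C' ∈ Q, u ∈ C' → C' = C) ∧
       (∀ C' ∈ Q, v ∈ C' → C' = C)) := by
  intro C hC huC hvC
  have hmem : ∀ D ∈ Q, (u ∈ D ↔ v ∈ D) := fun D hD => by
    simpa [hD] using Finset.ext_iff.mp hS D
  -- A member containing one of `u`, `v` contains both, so it is the member through the edge `uv`.
  have hu : ∀ D ∈ Q, u ∈ D → D = C := fun D hD huD =>
    (hpart u v huv).unique ⟨hD, huD, (hmem D hD).mp huD⟩ ⟨hC, huC, hvC⟩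
  refine ⟨fun t hCt ht => ?_, hu, fun D hD hvD => hu D hD ((hmem D hD).mpr hvD)⟩
  refine Finset.Subset.antisymm (fun x hx => ?_) hCt
  by_cases hxu : u = x
  · exact hxu ▸ huC
  -- The member covering the edge `ux` contains `u`, hence is `C`.
  · obtain ⟨D, ⟨hD, huD, hxD⟩, -⟩ := hpart u x (ht (hCt huC) hx hxu)
    exact hu D hD huD ▸ hxD
end

section
/- Let G be a simple graph on n vertices and let Q₁, …, Q_m be a greedy clique decomposition of G in which some member Q_j is a single edge {x, y} (a two-vertex clique). Then the number of members Q_i with i ≠ j that contain x or contain y is at most n − 2. -/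
namespace IsGreedyCliqueDecomposition

variable {n m : ℕ} {G : SimpleGraph (Fin n)} {Q : Fin m → Finset (Fin n)}

lemma adj_of_mem (hQ : IsGreedyCliqueDecomposition G Q) {i : Fin m} {u v : Fin n}
    (hu : u ∈ Q i) (hv : v ∈ Q i) (huv : u ≠ v) : G.Adj u v := by
  have h := hQ.2.1 i hu hv huv
  rw [greedyResidual, SimpleGraph.deleteEdges_adj] at h
  exact h.1

lemma index_eq (hQ : IsGreedyCliqueDecomposition G Q) {i k : Fin m} {u v : Fin n}
    (huv : u ≠ v) (hu : u ∈ Q i) (hv : v ∈ Q i) (hu' : u ∈ Q k) (hv' : v ∈ Q k) : i = k :=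
  (hQ.2.2.2 u v (hQ.adj_of_mem hu hv huv)).unique ⟨hu, hv⟩ ⟨hu', hv'⟩

/-- An edge covered by `Q k` is still present at every step `i ≤ k`. -/
lemma residual_adj (hQ : IsGreedyCliqueDecomposition G Q) {i k : Fin m} (hik : i ≤ k)
    {u v : Fin n} (huv : u ≠ v) (hu : u ∈ Q k) (hv : v ∈ Q k) :
    (greedyResidual G Q i).Adj u v := by
  rw [greedyResidual, SimpleGraph.deleteEdges_adj]
  refine ⟨hQ.adj_of_mem hu hv huv, ?_⟩
  rintro ⟨l, hl, h⟩
  have := hQ.index_eq huv (h u (by simp)) (h v (by simp)) hu hv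
  omega

/-- No vertex outside `Q i` is joined, at step `i`, to all of `Q i`. -/
lemma not_extend (hQ : IsGreedyCliqueDecomposition G Q) {i : Fin m} {w : Fin n}
    (hw : w ∉ Q i) (h : ∀ v ∈ Q i, (greedyResidual G Q i).Adj w v) : False := by
  have ht := hQ.2.2.1 i (insert w (Q i)) (Finset.subset_insert _ _) (by
    rw [Finset.coe_insert]
    exact (hQ.2.1 i).insert fun v hv _ => h v hv)
  exact hw (ht ▸ Finset.mem_insert_self _ _)

/-- The key consequence of greediness: a member `Q i ≠ Q j` through `x` has a vertex `v ∉ {x, y}`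
whose edge to `y`, if there is one, is covered before step `i`. -/
lemma exists_private_vertex (hQ : IsGreedyCliqueDecomposition G Q) {i j : Fin m} {x y : Fin n}
    (hne : x ≠ y) (hxy : Q j = {x, y}) (hij : i ≠ j) (hx : x ∈ Q i) :
    ∃ v ∈ Q i, v ≠ x ∧ v ≠ y ∧ ∀ k, y ∈ Q k → v ∈ Q k → k < i := by
  have hxj : x ∈ Q j := by simp [hxy]
  have hyj : y ∈ Q j := by simp [hxy]
  have hyi : y ∉ Q i := fun hy => hij (hQ.index_eq hne hx hy hxj hyj)
  by_contra! hcon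
  have hlate : ∀ v ∈ Q i, v ≠ x → ∃ k, y ∈ Q k ∧ v ∈ Q k ∧ i ≤ k := fun v hv hvx =>
    hcon v hv hvx (fun h => hyi (h ▸ hv))
  rcases lt_or_gt_of_ne hij with hlt | hgt
  · -- `y` extends `Q i`: the edge `xy` survives until step `j > i`, the others by `hlate`.
    refine hQ.not_extend hyi fun v hv => ?_
    by_cases hvx : v = x
    · subst hvx
      exact hQ.residual_adj hlt.le hne.symm hyj hxj
    · obtain ⟨k, hyk, hvk, hik⟩ := hlate v hv hvx
      exact hQ.residual_adj hik (fun h => hyi (h ▸ hv)) hyk hvk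
  · -- Any `v ∈ Q i` other than `x` extends `Q j`, as `xv` and `yv` survive past step `j < i`.
    obtain ⟨v, hv, hvx⟩ := Finset.exists_mem_ne (hQ.1 i) x
    have hvy : v ≠ y := fun h => hyi (h ▸ hv)
    obtain ⟨k, hyk, hvk, hik⟩ := hlate v hv hvx
    refine hQ.not_extend (i := j) (w := v) (by simp [hxy, hvx, hvy]) fun u hu => ?_
    rw [hxy, Finset.mem_insert, Finset.mem_singleton] at hu
    rcases hu with rfl | rfl
    · exact hQ.residual_adj hgt.le hvx hv hx
    · exact hQ.residual_adj (hgt.le.trans hik) hvy hvk hyk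

end IsGreedyCliqueDecomposition

/-- If some member `Q j` of a greedy clique decomposition is a single edge
`{x, y}`, then at most `n − 2` other members contain `x` or `y`. -/
theorem stmt_7 {n m : ℕ} (G : SimpleGraph (Fin n)) (Q : Fin m → Finset (Fin n))
    (hQ : IsGreedyCliqueDecomposition G Q) (j : Fin m) (x y : Fin n) (hne : x ≠ y)
    (hxy : Q j = {x, y}) :
    (Finset.univ.filter fun i : Fin m => i ≠ j ∧ (x ∈ Q i ∨ y ∈ Q i)).card ≤ n - 2 := by
  have hyx : Q j = {y, x} := by rw [hxy, Finset.pair_comm]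
  have key : ∀ i : Fin m, ∃ v : Fin n, (i ≠ j ∧ (x ∈ Q i ∨ y ∈ Q i)) →
      v ∈ Q i ∧ v ≠ x ∧ v ≠ y ∧
        ((x ∈ Q i ∧ ∀ k, y ∈ Q k → v ∈ Q k → k < i) ∨
          (y ∈ Q i ∧ ∀ k, x ∈ Q k → v ∈ Q k → k < i)) := by
    intro i
    by_cases h : i ≠ j ∧ (x ∈ Q i ∨ y ∈ Q i)
    · rcases h with ⟨hij, hx | hy⟩
      · obtain ⟨v, h1, h2, h3, h4⟩ := hQ.exists_private_vertex hne hxy hij hx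
        exact ⟨v, fun _ => ⟨h1, h2, h3, .inl ⟨hx, h4⟩⟩⟩
      · obtain ⟨v, h1, h2, h3, h4⟩ := hQ.exists_private_vertex hne.symm hyx hij hy
        exact ⟨v, fun _ => ⟨h1, h3, h2, .inr ⟨hy, h4⟩⟩⟩
    · exact ⟨x, fun h' => absurd h' h⟩
  choose f hf using key
  have hcard : (({x, y} : Finset (Fin n))ᶜ).card = n - 2 := by
    rw [Finset.card_compl, Finset.card_pair hne, Fintype.card_fin]
  rw [← hcard]
  refine Finset.card_le_card_of_injOn f ?_ ?_
  · intro i hi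
    obtain ⟨-, h2, h3, -⟩ := hf i (by simpa using hi)
    simp [h2, h3]
  · intro a ha b hb hab
    obtain ⟨a1, a2, a3, ha4⟩ := hf a (by simpa using ha)
    obtain ⟨b1, -, -, hb4⟩ := hf b (by simpa using hb)
    rw [← hab] at b1 hb4
    rcases ha4 with ⟨ax, ha4⟩ | ⟨ay, ha4⟩ <;> rcases hb4 with ⟨bx, hb4⟩ | ⟨bY, hb4⟩
    · exact hQ.index_eq a2 a1 ax b1 bx
    · exact absurd (ha4 b bY b1) (hb4 a ax a1).asymm
    · exact absurd (ha4 b bx b1) (hb4 a ay a1).asymm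
    · exact hQ.index_eq a3 a1 ay b1 bY
end

section
/- Let G be a simple graph on n vertices whose minimum degree equals ⌊n/2⌋ + r for some integer r ≥ 1, and let x be a vertex of G of degree exactly ⌊n/2⌋ + r. Then the subgraph of G induced by the neighborhood of x contains r pairwise vertex-disjoint edges (a matching of size r). -/
/-!
The matching is built greedily inside `N(x)`. By inclusion-exclusion every vertex `u` has at least
`2 (⌊n/2⌋ + r) - n ≥ 2r - 1` neighbours in `N(x)`. Moreover `|N(x)| = ⌊n/2⌋ + r ≥ 2r`, since
`deg x ≤ n - 1` forces `r ≤ ⌊n/2⌋`. If `k < r` disjoint edges have been chosen, they cover at most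
`2k ≤ 2r - 2` vertices, so some `u ∈ N(x)` is uncovered, and `u` in turn has an uncovered neighbour
in `N(x)`: this gives one more edge.
-/

/-- If the minimum degree of an `n`-vertex graph `G` equals `⌊n/2⌋ + r` with
`r ≥ 1`, and `x` is a vertex of minimum degree, then the subgraph induced by the
neighborhood of `x` contains a matching of size `r`. -/
theorem stmt_8 {n : ℕ} (G : SimpleGraph (Fin n)) [DecidableRel G.Adj]
    (r : ℕ) (hr : 1 ≤ r)
    (hmin : ∀ v : Fin n, n / 2 + r ≤ G.degree v)
    (x : Fin n) (hx : G.degree x = n / 2 + r) :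
    ∃ e : Fin r → Fin n × Fin n,
      (∀ i, G.Adj (e i).1 (e i).2 ∧ G.Adj x (e i).1 ∧ G.Adj x (e i).2) ∧
      (∀ i i', i ≠ i' →
        (e i).1 ≠ (e i').1 ∧ (e i).1 ≠ (e i').2 ∧
        (e i).2 ≠ (e i').1 ∧ (e i).2 ≠ (e i').2) := by
  -- Greedy step: the first `k` edges, together with a set `S` of at most `2k` vertices covering them.
  have key : ∀ k, k ≤ r → ∃ (e : Fin k → Fin n × Fin n) (S : Finset (Fin n)),
      S.card ≤ 2 * k ∧ (∀ i, (e i).1 ∈ S ∧ (e i).2 ∈ S) ∧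
      (∀ i, G.Adj (e i).1 (e i).2 ∧ G.Adj x (e i).1 ∧ G.Adj x (e i).2) ∧
      (∀ i i', i ≠ i' →
        (e i).1 ≠ (e i').1 ∧ (e i).1 ≠ (e i').2 ∧
        (e i).2 ≠ (e i').1 ∧ (e i).2 ≠ (e i').2) := by
    intro k
    induction k with
    | zero => exact fun _ => ⟨Fin.elim0, ∅, by simp, fun i => i.elim0, fun i => i.elim0,
        fun i => i.elim0⟩
    | succ k ih =>
      intro hk
      obtain ⟨e, S, hS, heS, hadj, hdis⟩ := ih (by omega)
      have hxn : G.degree x < n := by simpa using G.degree_lt_card_verts x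
      have hdx : (G.neighborFinset x).card = n / 2 + r := hx
      obtain ⟨u, hu, huS⟩ := Finset.exists_mem_notMem_of_card_lt_card
        (s := S) (t := G.neighborFinset x) (by omega)
      have hdu : n / 2 + r ≤ (G.neighborFinset u).card := hmin u
      have hie := Finset.card_union_add_card_inter (G.neighborFinset x) (G.neighborFinset u)
      have hun : (G.neighborFinset x ∪ G.neighborFinset u).card ≤ n := by
        simpa using Finset.card_le_univ (G.neighborFinset x ∪ G.neighborFinset u)
      obtain ⟨v, hv, hvS⟩ := Finset.exists_mem_notMem_of_card_lt_card
        (s := S) (t := G.neighborFinset x ∩ G.neighborFinset u) (by omega)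
      simp only [Finset.mem_inter, SimpleGraph.mem_neighborFinset] at hu hv
      have hne : ∀ i, (e i).1 ≠ u ∧ (e i).1 ≠ v ∧ (e i).2 ≠ u ∧ (e i).2 ≠ v := fun i =>
        ⟨ne_of_mem_of_not_mem (heS i).1 huS, ne_of_mem_of_not_mem (heS i).1 hvS,
          ne_of_mem_of_not_mem (heS i).2 huS, ne_of_mem_of_not_mem (heS i).2 hvS⟩
      refine ⟨Fin.cons (u, v) e, insert u (insert v S), ?_, ?_, ?_, ?_⟩
      · have h1 := Finset.card_insert_le u (insert v S)
        have h2 := Finset.card_insert_le v S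
        omega
      · intro i
        cases i using Fin.cases with
        | zero => simp
        | succ i => simp [heS i]
      · intro i
        cases i using Fin.cases with
        | zero => exact ⟨hv.2, hu, hv.1⟩
        | succ i => exact hadj i
      · intro i j hij
        cases i using Fin.cases with
        | zero =>
          cases j using Fin.cases with
          | zero => exact absurd rfl hij
          | succ j =>
            obtain ⟨h1, h2, h3, h4⟩ := hne j
            exact ⟨h1.symm, h3.symm, h2.symm, h4.symm⟩
        | succ i =>
          cases j using Fin.cases with
          | zero => exact hne i
          | succ j => exact hdis i j (fun h => hij (congrArg Fin.succ h))
  obtain ⟨e, _, _, _, h1, h2⟩ := key r le_rfl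
  exact ⟨e, h1, h2⟩
end

section
/- For n ≥ 4, every (distinct-set) representation of the complete bipartite graph K_{⌊n/2⌋,⌈n/2⌉} uses a ground set of at least ⌊n²/4⌋ elements; hence the intersection number of K_{⌊n/2⌋,⌈n/2⌉} equals ⌊n²/4⌋ and the bound ω(G) ≤ ⌊n²/4⌋ for n-vertex graphs is sharp. -/
/-!
Each edge `{a, b}` of the complete bipartite graph yields a point `f (a, b)` of `S a ∩ S b`.
Two vertices on the same side have disjoint sets, so a point of the ground set lies in the set of
at most one vertex on each side; hence `f` is injective and the ground set has at least
`⌊n/2⌋ * ⌈n/2⌉ = ⌊n²/4⌋` elements.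
-/

/-- For `n ≥ 4`, every distinct-set representation of the complete bipartite
graph `K_{⌊n/2⌋,⌈n/2⌉}` uses a ground set with at least `⌊n²/4⌋` elements. -/
theorem stmt_10 (n : ℕ) (hn : 4 ≤ n)
    (X : Finset ℕ) (S : Fin (n / 2) ⊕ Fin ((n + 1) / 2) → Finset ℕ)
    (hinj : Function.Injective S)
    (hsub : ∀ v, (S v).Nonempty ∧ S v ⊆ X)
    (hrep : ∀ u v, u ≠ v →
      ((completeBipartiteGraph (Fin (n / 2)) (Fin ((n + 1) / 2))).Adj u v →
        (S u ∩ S v).card = 1) ∧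
      (¬ (completeBipartiteGraph (Fin (n / 2)) (Fin ((n + 1) / 2))).Adj u v →
        (S u ∩ S v).card = 0)) :
    n ^ 2 / 4 ≤ X.card := by
  classical
  have hpt : ∀ p : Fin (n / 2) × Fin ((n + 1) / 2),
      ∃ x, x ∈ S (Sum.inl p.1) ∧ x ∈ S (Sum.inr p.2) := by
    intro p
    have h := (hrep (Sum.inl p.1) (Sum.inr p.2) (by simp)).1 (by simp)
    obtain ⟨x, hx⟩ := Finset.card_pos.mp (by omega : 0 < (S (Sum.inl p.1) ∩ S (Sum.inr p.2)).card)
    exact ⟨x, Finset.mem_inter.mp hx⟩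
  choose f hfl hfr using hpt
  have hsame : ∀ u v x, u ≠ v →
      ¬ (completeBipartiteGraph (Fin (n / 2)) (Fin ((n + 1) / 2))).Adj u v →
      x ∈ S u → x ∈ S v → False := by
    intro u v x huv hadj hu hv
    have h := Finset.card_eq_zero.mp ((hrep u v huv).2 hadj)
    have hx : x ∈ S u ∩ S v := Finset.mem_inter.mpr ⟨hu, hv⟩
    simp [h] at hx
  have hf : Function.Injective f := by
    intro p q hpq
    refine Prod.ext ?_ ?_
    · by_contra hne
      exact hsame (Sum.inl p.1) (Sum.inl q.1) (f p) (by simpa using hne) (by simp)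
        (hfl p) (hpq ▸ hfl q)
    · by_contra hne
      exact hsame (Sum.inr p.2) (Sum.inr q.2) (f p) (by simpa using hne) (by simp)
        (hfr p) (hpq ▸ hfr q)
  have hcard : (n / 2) * ((n + 1) / 2) ≤ X.card := by
    have h := Finset.card_le_card_of_injOn (s := Finset.univ) (t := X) f
      (fun p _ => (hsub _).2 (hfl p)) hf.injOn
    simpa using h
  refine le_trans ?_ hcard
  obtain ⟨k, rfl | rfl⟩ := Nat.even_or_odd' n
  · rw [show 2 * k / 2 = k by omega, show (2 * k + 1) / 2 = k by omega,
      show (2 * k) ^ 2 = 4 * (k * k) by ring]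
    omega
  · rw [show (2 * k + 1) / 2 = k by omega, show (2 * k + 1 + 1) / 2 = k + 1 by omega,
      show (2 * k + 1) ^ 2 = 4 * (k * (k + 1)) + 1 by ring]
    omega
end
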